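/- Let 1/2 < t < 1 and q > r ≥ 0 be fixed real constants and put δ := 1−t. Suppose M and N₀ are positive integers satisfying M ≥ max{ 4^{1/(1-t)}·(2(2t−1)/(1−t−δt))^{2/(t(1-t))}, (50·(11/10)^{t(2-t)})^{2/(1-t)} } and N₀ ≥ max{ 4752M⁴, 2r/(q((264M²)^{1/t}−2)), (10q(2q)^t M)^{1/(1-t)}, 2^{1/(1−t−δt)}·(q+r)/q, q^{-1}·(q(1−t−δt)/(q+r)^{t+δt})^{1/(1−t−δt)}, 1/(1−2^{−1/(2t−1)}), q^{-1}·(2q(1−t−δt))^{2/(1−δ)}·(2/(q(2t−1)))^{(1+δ)/(1−δ)}·M^{(2−δ)/(1−δ)}, q^{-1}·(2/(q(2t−1)))^{1/(2t−1)} }. Then for any positive integer n₀ ≥ N₀, the squares of sidelength (qn+r)^{-t} for n ≥ n₀ can be packed perfectly into a square of area ∑_{n=n₀}^{∞} (qn+r)^{-2t}. -/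

import Mathlib

open Set MeasureTheory

/-- The axis-parallel square with lower-left corner `c` and sidelength `s`. -/
noncomputable def square (c : ℝ × ℝ) (s : ℝ) : Set (ℝ × ℝ) :=
  Set.Icc c.1 (c.1 + s) ×ˢ Set.Icc c.2 (c.2 + s)

/-- The family of sets `S i` is packed perfectly into `Ω`: the sets are contained in `Ω`,
have pairwise disjoint interiors, and cover `Ω` up to a Lebesgue-null set. -/
def PerfectlyPacked {ι : Type*} (S : ι → Set (ℝ × ℝ)) (Ω : Set (ℝ × ℝ)) : Prop :=
  (∀ i, S i ⊆ Ω) ∧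
  (Pairwise fun i j => Disjoint (interior (S i)) (interior (S j))) ∧
  volume (Ω \ ⋃ i, S i) = 0

/-- A rectangle with lower-left corner `corner` and side lengths `width`, `height`. -/
structure Box where
  corner : ℝ × ℝ
  width : ℝ
  height : ℝ

namespace Box

/-- The half-open rectangle underlying a box. -/
def toSet (R : Box) : Set (ℝ × ℝ) :=
  Ico R.corner.1 (R.corner.1 + R.width) ×ˢ Ico R.corner.2 (R.corner.2 + R.height)

/-- The indicator function of the half-open rectangle underlying a box. -/
noncomputable def ind (R : Box) : ℝ × ℝ → ℕ := R.toSet.indicator 1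

/-- The area of a box. -/
def area (R : Box) : ℝ := R.width * R.height

/-- The semiperimeter of a box weighted by the `δ`-th power of its shorter side. -/
noncomputable def weight (δ : ℝ) (R : Box) : ℝ :=
  min R.width R.height ^ δ * (R.width + R.height)

/-- Reflection of a box in the diagonal. -/
def swap (R : Box) : Box := ⟨R.corner.swap, R.height, R.width⟩

lemma ind_of_mem {R : Box} {z : ℝ × ℝ} (h : z ∈ R.toSet) : R.ind z = 1 := by
  simp [ind, h]

lemma ind_of_notMem {R : Box} {z : ℝ × ℝ} (h : z ∉ R.toSet) : R.ind z = 0 := by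
  simp [ind, h]

lemma ind_le_one (R : Box) (z : ℝ × ℝ) : R.ind z ≤ 1 := by
  by_cases h : z ∈ R.toSet
  · simp [ind_of_mem h]
  · simp [ind_of_notMem h]

lemma ind_swap (R : Box) (z : ℝ × ℝ) : R.swap.ind z.swap = R.ind z := by
  have : z.swap ∈ R.swap.toSet ↔ z ∈ R.toSet := by
    simp [toSet, swap, and_comm]
  by_cases h : z ∈ R.toSet
  · rw [ind_of_mem h, ind_of_mem (this.2 h)]
  · rw [ind_of_notMem h, ind_of_notMem (fun h' => h (this.1 h'))]

lemma ind_split_width (p : ℝ × ℝ) {a₁ a₂ : ℝ} (h₁ : 0 ≤ a₁) (h₂ : 0 ≤ a₂) (b : ℝ) :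
    (⟨p, a₁ + a₂, b⟩ : Box).ind =
      (⟨p, a₁, b⟩ : Box).ind + (⟨(p.1 + a₁, p.2), a₂, b⟩ : Box).ind := by
  ext z
  simp only [ind, toSet, Pi.add_apply, Set.indicator_apply, Set.mem_prod, Set.mem_Ico, Pi.one_apply]
  split_ifs <;> grind

end Box

/-- The rectangle of size `a × b`, wherever it is placed, can be partitioned into squares of sides
`x i`, `n ≤ i < m`, and finitely many boxes of total weight at most `B`. -/
def Fillable (x : ℕ → ℝ) (δ a b : ℝ) (n m : ℕ) (B : ℝ) : Prop :=
  n ≤ m ∧ ∀ p : ℝ × ℝ, ∃ (pos : ℕ → ℝ × ℝ) (L : Multiset Box),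
    (∀ R ∈ L, 0 ≤ R.width ∧ R.width ≤ a ∧ 0 ≤ R.height ∧ R.height ≤ b) ∧
    (∀ z, (⟨p, a, b⟩ : Box).ind z =
      ∑ i ∈ Finset.Ico n m, (⟨pos i, x i, x i⟩ : Box).ind z + (L.map fun R => R.ind z).sum) ∧
    a * b = ∑ i ∈ Finset.Ico n m, x i ^ 2 + (L.map Box.area).sum ∧
    (L.map (Box.weight δ)).sum ≤ B

namespace Fillable

variable {x : ℕ → ℝ} {δ a a₁ a₂ b b₁ b₂ B B₁ B₂ : ℝ} {n m k : ℕ}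

lemma mono (h : Fillable x δ a b n m B₁) (hB : B₁ ≤ B₂) : Fillable x δ a b n m B₂ := by
  refine ⟨h.1, fun p => ?_⟩
  obtain ⟨pos, L, h1, h2, h3, h4⟩ := h.2 p
  exact ⟨pos, L, h1, h2, h3, h4.trans hB⟩

lemma refl (x : ℕ → ℝ) (δ : ℝ) (ha : 0 ≤ a) (hb : 0 ≤ b) (n : ℕ) :
    Fillable x δ a b n n (min a b ^ δ * (a + b)) := by
  refine ⟨le_rfl, fun p => ⟨fun _ => 0, {⟨p, a, b⟩}, ?_, ?_, ?_, ?_⟩⟩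
  · simp [ha, hb]
  · simp
  · simp [Box.area]
  · simp [Box.weight]

lemma square (x : ℕ → ℝ) (δ : ℝ) (n : ℕ) : Fillable x δ (x n) (x n) n (n + 1) 0 := by
  refine ⟨by omega, fun p => ⟨fun _ => p, 0, ?_, ?_, ?_, ?_⟩⟩
  · simp
  · simp
  · simp [sq]
  · simp

lemma swap (h : Fillable x δ a b n m B) : Fillable x δ b a n m B := by
  refine ⟨h.1, fun p => ?_⟩
  obtain ⟨pos, L, h1, h2, h3, h4⟩ := h.2 p.swap
  refine ⟨fun i => (pos i).swap, L.map Box.swap, ?_, ?_, ?_, ?_⟩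
  · simp only [Multiset.mem_map]
    rintro _ ⟨R, hR, rfl⟩
    obtain ⟨c1, c2, c3, c4⟩ := h1 R hR
    exact ⟨c3, c4, c1, c2⟩
  · intro z
    have key := h2 z.swap
    have e : (⟨p, b, a⟩ : Box).ind z = (⟨p.swap, a, b⟩ : Box).ind z.swap := by
      rw [← Box.ind_swap]; rfl
    rw [e, key, Multiset.map_map]
    congr 1
    · refine Finset.sum_congr rfl fun i _ => ?_
      rw [← Box.ind_swap]; rfl
    · congr 1
      refine Multiset.map_congr rfl fun R _ => ?_
      rw [← Box.ind_swap R]; rfl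
  · rw [mul_comm, h3, Multiset.map_map]
    congr 2
    refine Multiset.map_congr rfl fun R _ => ?_
    simp [Box.area, Box.swap, mul_comm]
  · rw [Multiset.map_map]
    refine le_of_eq_of_le ?_ h4
    congr 1
    refine Multiset.map_congr rfl fun R _ => ?_
    simp [Box.weight, Box.swap, min_comm, add_comm]

lemma append_width (ha₁ : 0 ≤ a₁) (ha₂ : 0 ≤ a₂)
    (h₁ : Fillable x δ a₁ b n m B₁) (h₂ : Fillable x δ a₂ b m k B₂) :
    Fillable x δ (a₁ + a₂) b n k (B₁ + B₂) := by
  refine ⟨h₁.1.trans h₂.1, fun p => ?_⟩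
  obtain ⟨pos₁, L₁, c1, c2, c3, c4⟩ := h₁.2 p
  obtain ⟨pos₂, L₂, d1, d2, d3, d4⟩ := h₂.2 (p.1 + a₁, p.2)
  refine ⟨fun i => if i < m then pos₁ i else pos₂ i, L₁ + L₂, ?_, ?_, ?_, ?_⟩
  · intro R hR
    rcases Multiset.mem_add.1 hR with hR | hR
    · obtain ⟨e1, e2, e3, e4⟩ := c1 R hR
      exact ⟨e1, by linarith, e3, e4⟩
    · obtain ⟨e1, e2, e3, e4⟩ := d1 R hR
      exact ⟨e1, by linarith, e3, e4⟩
  · intro z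
    rw [Box.ind_split_width p ha₁ ha₂, Pi.add_apply, c2, d2,
      ← Finset.sum_Ico_consecutive _ h₁.1 h₂.1, Multiset.map_add, Multiset.sum_add]
    have e1 : ∑ i ∈ Finset.Ico n m,
        (⟨if i < m then pos₁ i else pos₂ i, x i, x i⟩ : Box).ind z =
        ∑ i ∈ Finset.Ico n m, (⟨pos₁ i, x i, x i⟩ : Box).ind z :=
      Finset.sum_congr rfl fun i hi => by rw [if_pos (Finset.mem_Ico.1 hi).2]
    have e2 : ∑ i ∈ Finset.Ico m k,
        (⟨if i < m then pos₁ i else pos₂ i, x i, x i⟩ : Box).ind z =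
        ∑ i ∈ Finset.Ico m k, (⟨pos₂ i, x i, x i⟩ : Box).ind z :=
      Finset.sum_congr rfl fun i hi => by rw [if_neg (Finset.mem_Ico.1 hi).1.not_gt]
    rw [e1, e2]
    ring
  · rw [← Finset.sum_Ico_consecutive _ h₁.1 h₂.1, Multiset.map_add, Multiset.sum_add, add_mul,
      c3, d3]
    ring
  · rw [Multiset.map_add, Multiset.sum_add]
    exact add_le_add c4 d4

lemma append_height (hb₁ : 0 ≤ b₁) (hb₂ : 0 ≤ b₂)
    (h₁ : Fillable x δ a b₁ n m B₁) (h₂ : Fillable x δ a b₂ m k B₂) :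
    Fillable x δ a (b₁ + b₂) n k (B₁ + B₂) :=
  (append_width hb₁ hb₂ h₁.swap h₂.swap).swap

/-- Stacking the squares `x n, …, x (n + H - 1)` in a column of width `w`. -/
lemma column (w : ℝ) (hx : ∀ i, 0 ≤ x i) (C : ℝ) :
    ∀ (H n : ℕ) (h : ℝ), (∀ i, n ≤ i → i < n + H → x i ≤ w) →
      (∀ i, n ≤ i → i < n + H → min (w - x i) (x i) ^ δ * w ≤ C) → 0 ≤ w →
      ∑ i ∈ Finset.Ico n (n + H), x i ≤ h →
      Fillable x δ w h n (n + H)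
        (H * C + min w (h - ∑ i ∈ Finset.Ico n (n + H), x i) ^ δ *
          (w + (h - ∑ i ∈ Finset.Ico n (n + H), x i))) := by
  intro H
  induction H with
  | zero =>
    intro n h _ _ hw hh
    simp only [add_zero, Finset.Ico_self, Finset.sum_empty] at hh
    simpa using refl x δ hw hh n
  | succ H ih =>
    intro n h hle hC hw hh
    have hsum : ∑ i ∈ Finset.Ico n (n + (H + 1)), x i =
        x n + ∑ i ∈ Finset.Ico (n + 1) (n + 1 + H), x i := by
      rw [Finset.sum_eq_sum_Ico_succ_bot (by omega)]
      congr 3; omega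
    have hrest : ∑ i ∈ Finset.Ico (n + 1) (n + 1 + H), x i ≤ h - x n := by linarith
    have hrest0 : 0 ≤ ∑ i ∈ Finset.Ico (n + 1) (n + 1 + H), x i :=
      Finset.sum_nonneg fun i _ => hx i
    have hxn := hle n le_rfl (by omega)
    have row : Fillable x δ (x n + (w - x n)) (x n) n (n + 1)
        (0 + min (w - x n) (x n) ^ δ * ((w - x n) + x n)) :=
      append_width (hx n) (by linarith) (square x δ n) (refl x δ (by linarith) (hx n) (n + 1))
    have row' : Fillable x δ w (x n) n (n + 1) C := by
      rw [add_sub_cancel] at row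
      refine row.mono ?_
      have := hC n le_rfl (by omega)
      simpa using this
    have rest := ih (n + 1) (h - x n) (fun i h1 h2 => hle i (by omega) (by omega))
      (fun i h1 h2 => hC i (by omega) (by omega)) hw hrest
    have tot := append_height (hx n) (by linarith) row' rest
    rw [add_sub_cancel, show n + 1 + H = n + (H + 1) by omega] at tot
    refine tot.mono (le_of_eq ?_)
    rw [hsum, show n + 1 + H = n + (H + 1) by omega]
    push_cast
    rw [sub_sub]
    ring

/-- Filling a slab of height `h` by `k` consecutive columns of `H` squares each. -/
lemma columns (H : ℕ) (h D : ℝ) (hh : 0 ≤ h) (hx : ∀ i, 0 ≤ x i) (n : ℕ) :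
    ∀ k : ℕ, (∀ j < k, Fillable x δ (x (n + j * H)) h (n + j * H) (n + j * H + H) D) →
      Fillable x δ (∑ j ∈ Finset.range k, x (n + j * H)) h n (n + k * H)
        (min 0 h ^ δ * h + k * D) := by
  intro k
  induction k with
  | zero =>
    intro _
    simpa using refl (a := 0) x δ le_rfl hh n
  | succ k ih =>
    intro hD
    have := append_width (Finset.sum_nonneg fun i _ => hx _) (hx _)
      (ih fun j hj => hD j (by omega)) (hD k (by omega))
    rw [Finset.sum_range_succ, show n + (k + 1) * H = n + k * H + H by ring]
    refine this.mono (le_of_eq ?_)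
    push_cast
    ring

end Fillable

/-- Tangent line bound for a negative power at `1`. -/
lemma one_sub_mul_le_rpow_neg {u s : ℝ} (hu : 0 < u) (hs : 0 ≤ s) :
    1 - s * (u - 1) ≤ u ^ (-s) := by
  rw [Real.rpow_def_of_pos hu]
  have h1 := Real.add_one_le_exp (Real.log u * -s)
  have h2 := Real.log_le_sub_one_of_pos hu
  nlinarith

section HarmonicPower

variable {ρ t : ℝ}

/-- The sidelength `(n + ρ) ^ (-t)`. -/
noncomputable def side (ρ t : ℝ) (n : ℕ) : ℝ := ((n : ℝ) + ρ) ^ (-t)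

lemma side_nonneg (hρ : 0 ≤ ρ) (n : ℕ) : 0 ≤ side ρ t n := by
  unfold side; positivity

lemma side_pos (hρ : 0 ≤ ρ) {n : ℕ} (hn : 0 < n) : 0 < side ρ t n := by
  have : (0 : ℝ) < n := by exact_mod_cast hn
  unfold side; positivity

lemma side_anti (hρ : 0 ≤ ρ) (ht : 0 ≤ t) {n m : ℕ} (hn : 0 < n) (h : n ≤ m) :
    side ρ t m ≤ side ρ t n := by
  have h0 : (0 : ℝ) < n := by exact_mod_cast hn
  have h1 : (n : ℝ) ≤ m := by exact_mod_cast h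
  exact Real.rpow_le_rpow_of_nonpos (by linarith) (by linarith) (by linarith)

lemma side_sub_le (hρ : 0 ≤ ρ) (ht : 0 ≤ t) (ht1 : t ≤ 1) {n : ℕ} (hn : 0 < n) (i : ℕ) :
    side ρ t n - side ρ t (n + i) ≤ side ρ t n * (i / (n + ρ)) := by
  have h0 : (0 : ℝ) < n := by exact_mod_cast hn
  have hN : 0 < (n : ℝ) + ρ := by linarith
  have hu : 0 < 1 + (i : ℝ) / (n + ρ) := by positivity
  have e : side ρ t (n + i) = side ρ t n * (1 + (i : ℝ) / (n + ρ)) ^ (-t) := by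
    unfold side
    rw [← Real.mul_rpow hN.le hu.le]
    congr 1
    push_cast
    field_simp
    ring
  have h1 := one_sub_mul_le_rpow_neg hu ht
  have h2 : t * ((i : ℝ) / (n + ρ)) ≤ (i : ℝ) / (n + ρ) :=
    mul_le_of_le_one_left (by positivity) ht1
  have h3 := side_nonneg (t := t) hρ n
  rw [e]
  nlinarith

lemma half_side_le (hρ : 0 ≤ ρ) (ht : 0 ≤ t) (ht1 : t ≤ 1) {n i : ℕ} (hn : 0 < n)
    (hi : (i : ℝ) ≤ n + ρ) : side ρ t n / 2 ≤ side ρ t (n + i) := by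
  have h0 : (0 : ℝ) < n := by exact_mod_cast hn
  have hN : 0 < (n : ℝ) + ρ := by linarith
  have h1 : (2 * ((n : ℝ) + ρ)) ^ (-t) ≤ side ρ t (n + i) := by
    unfold side
    push_cast
    refine Real.rpow_le_rpow_of_nonpos (by positivity) (by linarith) (by linarith)
  rw [Real.mul_rpow (by norm_num) hN.le] at h1
  have h2 : (2 : ℝ) ^ (-1 : ℝ) ≤ 2 ^ (-t) :=
    Real.rpow_le_rpow_of_exponent_le (by norm_num) (by linarith)
  rw [Real.rpow_neg_one] at h2
  have h3 := side_nonneg (t := t) hρ n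
  change 2 ^ (-t) * side ρ t n ≤ _ at h1
  nlinarith

lemma fillable_slab {δ : ℝ} (hδ : 0 < δ) (hρ : 0 ≤ ρ) (ht : 0 ≤ t) (ht1 : t ≤ 1) {n H K : ℕ}
    (hn : 0 < n) (hH : 0 < H) {a : ℝ} (ha : side ρ t n ≤ a)
    (hK : (K : ℝ) * H ^ 2 ≤ n + ρ) (haK : a < K * (side ρ t n / 2)) :
    ∃ k : ℕ, 0 < k ∧ k * side ρ t n ≤ 2 * a ∧ (k : ℝ) * H ^ 2 ≤ n + ρ ∧
      Fillable (side ρ t) δ a (H * side ρ t n) n (n + k * H)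
        (k * ((H + 2) * (k * H ^ 2 / (n + ρ)) ^ δ * side ρ t n ^ (1 + δ)) +
          (H + 1) * side ρ t n ^ (1 + δ)) := by
  classical
  set s := side ρ t with hs
  have hx0 : ∀ i, 0 ≤ s i := side_nonneg hρ
  have hxn : 0 < s n := side_pos hρ hn
  have h0 : (0 : ℝ) < n := by exact_mod_cast hn
  have hN : 0 < (n : ℝ) + ρ := by linarith
  have hH1 : (1 : ℝ) ≤ H := by exact_mod_cast hH
  -- every column used below starts before index `2 n`
  have hhalf : ∀ k : ℕ, (k : ℝ) * H ^ 2 ≤ n + ρ →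
      k * (s n / 2) ≤ ∑ j ∈ Finset.range k, s (n + j * H) := by
    intro k hk
    have : ∑ j ∈ Finset.range k, s n / 2 ≤ ∑ j ∈ Finset.range k, s (n + j * H) := by
      refine Finset.sum_le_sum fun j hj => half_side_le hρ ht ht1 hn ?_
      have hj' : (j : ℝ) ≤ k := by exact_mod_cast (Finset.mem_range.1 hj).le
      push_cast
      have : (j : ℝ) * H ≤ k * H ^ 2 := by
        rw [sq]
        have : (j : ℝ) * H ≤ k * H := by gcongr
        nlinarith [mul_nonneg (Nat.cast_nonneg (α := ℝ) k) (Nat.cast_nonneg (α := ℝ) H)]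
      linarith
    simpa using this
  have hKpos : 0 < K := by
    rcases Nat.eq_zero_or_pos K with h | h
    · rw [h] at haK; simp at haK; linarith
    · exact h
  have hex : ∃ k : ℕ, a < ∑ j ∈ Finset.range (k + 1), s (n + j * H) := by
    refine ⟨K - 1, ?_⟩
    rw [Nat.sub_add_cancel hKpos]
    exact haK.trans_le (hhalf K hK)
  set k := Nat.find hex with hk
  have hk1 : a < ∑ j ∈ Finset.range (k + 1), s (n + j * H) := Nat.find_spec hex
  have hkK : k ≤ K - 1 := Nat.find_min' hex (by
    rw [Nat.sub_add_cancel hKpos]; exact haK.trans_le (hhalf K hK))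
  have hkpos : 0 < k := by
    rw [Nat.pos_iff_ne_zero]
    intro h
    rw [h] at hk1
    simp at hk1
    linarith
  have hk2 : ∑ j ∈ Finset.range k, s (n + j * H) ≤ a := by
    have := Nat.find_min hex (m := k - 1) (by omega)
    rw [Nat.sub_add_cancel hkpos] at this
    exact not_lt.1 this
  have hkH : (k : ℝ) * H ^ 2 ≤ n + ρ := by
    have : (k : ℝ) ≤ K := by exact_mod_cast (by omega : k ≤ K)
    refine le_trans ?_ hK
    gcongr
  refine ⟨k, hkpos, by linarith [hhalf k hkH], hkH, ?_⟩
  have hk1' : (1 : ℝ) ≤ k := by exact_mod_cast hkpos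
  set η : ℝ := k * H ^ 2 / (n + ρ) with hη
  have hη0 : 0 ≤ η := by positivity
  have hη1 : η ≤ 1 := by rw [hη, div_le_one hN]; exact hkH
  have hHη : (H : ℝ) / (n + ρ) ≤ η := by
    rw [hη]; gcongr
    nlinarith
  have hP : s n ^ (1 + δ) = s n ^ δ * s n := by
    rw [add_comm, Real.rpow_add hxn, Real.rpow_one]
  have hcol : ∀ j < k, Fillable s δ (s (n + j * H)) (H * s n) (n + j * H) (n + j * H + H)
      ((H + 2) * η ^ δ * s n ^ (1 + δ)) := by
    intro j hj
    have hm : 0 < n + j * H := by omega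
    have hwn : s (n + j * H) ≤ s n := side_anti hρ ht hn (by omega)
    have hlast : ∀ i, i ∈ Finset.Ico (n + j * H) (n + j * H + H) →
        s n - s i ≤ s n * (k * H / (n + ρ)) := by
      intro i hi
      obtain ⟨hi1, hi2⟩ := Finset.mem_Ico.1 hi
      obtain ⟨d, rfl⟩ : ∃ d, i = n + d := ⟨i - n, by omega⟩
      refine (side_sub_le hρ ht ht1 hn d).trans ?_
      have h1 : d ≤ k * H := by
        have : (j + 1) * H ≤ k * H := Nat.mul_le_mul_right _ hj
        linarith
      have h2 : (d : ℝ) ≤ k * H := by exact_mod_cast h1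
      gcongr
    have hsum1 : ∑ i ∈ Finset.Ico (n + j * H) (n + j * H + H), s i ≤ H * s n := by
      have : ∑ i ∈ Finset.Ico (n + j * H) (n + j * H + H), s i ≤
          ∑ i ∈ Finset.Ico (n + j * H) (n + j * H + H), s n :=
        Finset.sum_le_sum fun i hi =>
          side_anti hρ ht hn (by have := (Finset.mem_Ico.1 hi).1; omega)
      simpa using this
    have hsum2 : H * s n - ∑ i ∈ Finset.Ico (n + j * H) (n + j * H + H), s i ≤ η * s n := by
      have : ∑ i ∈ Finset.Ico (n + j * H) (n + j * H + H), (s n - s i) ≤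
          ∑ i ∈ Finset.Ico (n + j * H) (n + j * H + H), s n * (k * H / (n + ρ)) :=
        Finset.sum_le_sum hlast
      rw [Finset.sum_sub_distrib] at this
      simp only [Finset.sum_const, Nat.card_Ico, add_tsub_cancel_left, nsmul_eq_mul] at this
      refine this.trans (le_of_eq ?_)
      rw [hη]; ring
    refine (Fillable.column (s (n + j * H)) hx0 ((η * s n) ^ δ * s n) H (n + j * H) (H * s n)
      (fun i h1 h2 => side_anti hρ ht hm h1) ?_ (hx0 _) hsum1).mono ?_
    · intro i h1 h2
      obtain ⟨d, rfl⟩ : ∃ d, i = n + j * H + d := ⟨i - (n + j * H), by omega⟩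
      have hd : (d : ℝ) ≤ H := by exact_mod_cast (by omega : d ≤ H)
      have hsub : s (n + j * H) - s (n + j * H + d) ≤ η * s n := by
        refine (side_sub_le hρ ht ht1 hm d).trans ?_
        rw [mul_comm η]
        refine mul_le_mul hwn ?_ (by positivity) hxn.le
        refine le_trans ?_ hHη
        push_cast
        gcongr
        have : (0 : ℝ) ≤ j * H := by positivity
        linarith
      have hmin : 0 ≤ min (s (n + j * H) - s (n + j * H + d)) (s (n + j * H + d)) :=
        le_min (sub_nonneg.2 (side_anti hρ ht hm (by omega))) (hx0 _)
      refine mul_le_mul ?_ hwn (hx0 _) (by positivity)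
      exact Real.rpow_le_rpow hmin ((min_le_left _ _).trans hsub) hδ.le
    · have hgap : 0 ≤ H * s n - ∑ i ∈ Finset.Ico (n + j * H) (n + j * H + H), s i := by linarith
      have h1 : min (s (n + j * H))
          (H * s n - ∑ i ∈ Finset.Ico (n + j * H) (n + j * H + H), s i) ^ δ ≤ (η * s n) ^ δ :=
        Real.rpow_le_rpow (le_min (hx0 _) hgap) ((min_le_right _ _).trans hsum2) hδ.le
      have h2 : s (n + j * H) +
          (H * s n - ∑ i ∈ Finset.Ico (n + j * H) (n + j * H + H), s i) ≤ 2 * s n := by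
        have : η * s n ≤ 1 * s n := by gcongr
        linarith
      have h3 := mul_le_mul h1 h2 (by linarith [hx0 (n + j * H)]) (by positivity)
      rw [hP]
      rw [Real.mul_rpow hη0 hxn.le] at h3 ⊢
      linarith
  have hcols := Fillable.columns (x := s) H (H * s n) _ (by positivity) hx0 n k hcol
  have hend := Fillable.refl (a := a - ∑ j ∈ Finset.range k, s (n + j * H)) (b := H * s n)
    s δ (by linarith) (by positivity) (n + k * H)
  have htot := Fillable.append_width (Finset.sum_nonneg fun i _ => hx0 _) (by linarith) hcols hend
  rw [add_sub_cancel] at htot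
  refine htot.mono ?_
  have e0 : min 0 (H * s n) = 0 := min_eq_left (by positivity)
  rw [e0, Real.zero_rpow hδ.ne']
  have he : a - ∑ j ∈ Finset.range k, s (n + j * H) ≤ s n := by
    rw [Finset.sum_range_succ] at hk1
    have : s (n + k * H) ≤ s n := side_anti hρ ht hn (by omega)
    linarith
  have h1 : min (a - ∑ j ∈ Finset.range k, s (n + j * H)) (H * s n) ^ δ ≤ s n ^ δ :=
    Real.rpow_le_rpow (le_min (by linarith) (by positivity)) ((min_le_left _ _).trans he) hδ.le
  have h2 : a - ∑ j ∈ Finset.range k, s (n + j * H) + H * s n ≤ (H + 1) * s n := by linarith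
  have h3 := mul_le_mul h1 h2 (by
    have : (0 : ℝ) ≤ H * s n := by positivity
    linarith) (by positivity)
  rw [hP]
  linarith

lemma fillable_step_of_le {δ : ℝ} (hδ : 0 < δ) (hρ : 0 ≤ ρ) (ht : 0 ≤ t) (ht1 : t ≤ 1) {n H K : ℕ}
    (hn : 0 < n) (hH : 0 < H) {a b W : ℝ} (hab : a ≤ b) (hWH : (H : ℝ) ≤ W)
    (hWδ : (H + 1 : ℝ) ≤ W ^ δ * H) (ha : W * side ρ t n ≤ a)
    (hK : (K : ℝ) * H ^ 2 ≤ n + ρ) (haK : a < K * (side ρ t n / 2)) :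
    ∃ k : ℕ, 0 < k ∧ k * side ρ t n ≤ 2 * a ∧ (k : ℝ) * H ^ 2 ≤ n + ρ ∧
      Fillable (side ρ t) δ a b n (n + k * H)
        (min a b ^ δ * (a + b) +
          k * ((H + 2) * (k * H ^ 2 / (n + ρ)) ^ δ * side ρ t n ^ (1 + δ))) := by
  have hH1 : (1 : ℝ) ≤ H := by exact_mod_cast hH
  have hxn : 0 < side ρ t n := side_pos hρ hn
  have hHa : H * side ρ t n ≤ a := le_trans (by gcongr) ha
  obtain ⟨k, h1, h2, h3, h4⟩ := fillable_slab (a := a) hδ hρ ht ht1 hn hH (by nlinarith) hK haK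
  refine ⟨k, h1, h2, h3, ?_⟩
  have ha0 : 0 < a := by nlinarith
  have hrest := Fillable.refl (a := a) (b := b - H * side ρ t n) (side ρ t) δ ha0.le
    (by linarith) (n + k * H)
  have htot := Fillable.append_height (by positivity) (by linarith) h4 hrest
  rw [add_sub_cancel] at htot
  refine htot.mono ?_
  rw [min_eq_left hab]
  have e1 : min a (b - H * side ρ t n) ^ δ ≤ a ^ δ :=
    Real.rpow_le_rpow (le_min ha0.le (by linarith)) (min_le_left _ _) hδ.le
  have e2 : min a (b - H * side ρ t n) ^ δ * (a + (b - H * side ρ t n)) ≤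
      a ^ δ * (a + (b - H * side ρ t n)) :=
    mul_le_mul_of_nonneg_right e1 (by linarith)
  have e3 : W ^ δ * side ρ t n ^ δ ≤ a ^ δ := by
    rw [← Real.mul_rpow (by linarith) hxn.le]
    exact Real.rpow_le_rpow (by nlinarith) ha hδ.le
  have e4 : (H + 1) * side ρ t n ^ (1 + δ) ≤ a ^ δ * (H * side ρ t n) := by
    rw [add_comm 1 δ, Real.rpow_add hxn, Real.rpow_one]
    have p : 0 ≤ side ρ t n ^ δ * side ρ t n := by positivity
    calc (H + 1) * (side ρ t n ^ δ * side ρ t n)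
        ≤ (W ^ δ * H) * (side ρ t n ^ δ * side ρ t n) := by gcongr
      _ = (W ^ δ * side ρ t n ^ δ) * (H * side ρ t n) := by ring
      _ ≤ _ := by gcongr
  linarith

lemma fillable_step {δ : ℝ} (hδ : 0 < δ) (hρ : 0 ≤ ρ) (ht : 0 ≤ t) (ht1 : t ≤ 1) {n H K : ℕ}
    (hn : 0 < n) (hH : 0 < H) {a b W : ℝ} (hWH : (H : ℝ) ≤ W)
    (hWδ : (H + 1 : ℝ) ≤ W ^ δ * H) (hab : W * side ρ t n ≤ min a b)
    (hK : (K : ℝ) * H ^ 2 ≤ n + ρ) (haK : min a b < K * (side ρ t n / 2)) :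
    ∃ k : ℕ, 0 < k ∧ k * side ρ t n ≤ 2 * min a b ∧ (k : ℝ) * H ^ 2 ≤ n + ρ ∧
      Fillable (side ρ t) δ a b n (n + k * H)
        (min a b ^ δ * (a + b) +
          k * ((H + 2) * (k * H ^ 2 / (n + ρ)) ^ δ * side ρ t n ^ (1 + δ))) := by
  rcases le_total a b with h | h
  · rw [min_eq_left h] at hab haK
    have := fillable_step_of_le hδ hρ ht ht1 hn hH h hWH hWδ hab hK haK
    rwa [min_eq_left h] at this ⊢
  · rw [min_eq_right h] at hab haK
    obtain ⟨k, h1, h2, h3, h4⟩ := fillable_step_of_le hδ hρ ht ht1 hn hH h hWH hWδ hab hK haK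
    refine ⟨k, h1, ?_, h3, ?_⟩
    · rwa [min_eq_right h]
    · have := h4.swap
      rwa [min_comm b a, add_comm b a] at this

end HarmonicPower

/-- A lower bound for the growth of a concave power. -/
lemma rpow_add_mul_le_rpow_add {N K κ : ℝ} (hN : 0 < N) (hK : 0 ≤ K) (hKN : K ≤ N) (hκ : 0 ≤ κ)
    (hκ1 : κ ≤ 1) : N ^ κ + κ * K * N ^ (κ - 1) / 2 ≤ (N + K) ^ κ := by
  have hNK : 0 < N + K := by linarith
  have h1 : (1 + -(K / (N + K))) ^ κ ≤ 1 + κ * -(K / (N + K)) := by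
    refine rpow_one_add_le_one_add_mul_self ?_ hκ hκ1
    rw [neg_le_neg_iff, div_le_one hNK]; linarith
  have e1 : 1 + -(K / (N + K)) = N / (N + K) := by field_simp; ring
  rw [e1, Real.div_rpow hN.le hNK.le, div_le_iff₀ (by positivity)] at h1
  have h2 : (2 * N) ^ (κ - 1) ≤ (N + K) ^ (κ - 1) :=
    Real.rpow_le_rpow_of_nonpos hNK (by linarith) (by linarith)
  rw [Real.mul_rpow (by norm_num) hN.le] at h2
  have h3 : (2 : ℝ) ^ (-1 : ℝ) ≤ 2 ^ (κ - 1) :=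
    Real.rpow_le_rpow_of_exponent_le (by norm_num) (by linarith)
  rw [Real.rpow_neg_one] at h3
  have h4 : (N + K) ^ κ = (N + K) ^ (κ - 1) * (N + K) := by
    rw [← Real.rpow_add_one hNK.ne']; congr 1; ring
  have h5 : 2⁻¹ * N ^ (κ - 1) ≤ (N + K) ^ (κ - 1) :=
    le_trans (mul_le_mul_of_nonneg_right h3 (by positivity)) h2
  have h6 : (1 + κ * -(K / (N + K))) * (N + K) ^ κ =
      (N + K) ^ κ - κ * K * (N + K) ^ (κ - 1) := by
    rw [h4]; field_simp; ring
  rw [h6] at h1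
  have h7 : κ * K * (2⁻¹ * N ^ (κ - 1)) ≤ κ * K * (N + K) ^ (κ - 1) := by gcongr
  linarith

section TailSums

variable {ρ t : ℝ}

/-- The total area of the squares of sides `side ρ t i`, `i ≥ n`. -/
noncomputable def tailArea (ρ t : ℝ) (n : ℕ) : ℝ := ∑' i : ℕ, side ρ t (n + i) ^ 2

lemma side_sq (hρ : 0 ≤ ρ) (n : ℕ) : side ρ t n ^ 2 = ((n : ℝ) + ρ) ^ (-(2 * t)) := by
  unfold side
  rw [← Real.rpow_natCast, ← Real.rpow_mul (by positivity)]
  congr 1; push_cast; ring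

lemma side_sq_le (ht : 1 / 2 < t) (hρ : 0 ≤ ρ) {n : ℕ} (hn : 0 < n) :
    side ρ t (n + 1) ^ 2 ≤
      (((n : ℝ) + ρ) ^ (-(2 * t - 1)) - ((n : ℝ) + 1 + ρ) ^ (-(2 * t - 1))) / (2 * t - 1) := by
  have h0 : (0 : ℝ) < n := by exact_mod_cast hn
  have hN : 0 < (n : ℝ) + 1 + ρ := by linarith
  have hN' : 0 < (n : ℝ) + ρ := by linarith
  rw [side_sq hρ, le_div_iff₀ (by linarith)]
  push_cast
  have h1 := one_sub_mul_le_rpow_neg (u := ((n : ℝ) + ρ) / (n + 1 + ρ)) (s := 2 * t - 1)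
    (by positivity) (by linarith)
  rw [Real.div_rpow hN'.le hN.le, le_div_iff₀ (by positivity)] at h1
  have h2 : ((n : ℝ) + 1 + ρ) ^ (-(2 * t)) * (n + 1 + ρ) = ((n : ℝ) + 1 + ρ) ^ (-(2 * t - 1)) := by
    rw [← Real.rpow_add_one hN.ne']; congr 1; ring
  have h3 : (n + ρ) / ((n : ℝ) + 1 + ρ) - 1 = -1 / ((n : ℝ) + 1 + ρ) := by field_simp; ring
  rw [h3] at h1
  have h4 : (1 - (2 * t - 1) * (-1 / ((n : ℝ) + 1 + ρ))) * ((n : ℝ) + 1 + ρ) ^ (-(2 * t - 1)) =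
      ((n : ℝ) + 1 + ρ) ^ (-(2 * t - 1)) + (2 * t - 1) * ((n : ℝ) + 1 + ρ) ^ (-(2 * t)) := by
    rw [← h2]; field_simp; ring
  linarith

lemma le_side_sq (ht : 1 / 2 < t) (hρ : 0 ≤ ρ) {n : ℕ} (hn : 0 < n) :
    (((n : ℝ) + ρ) ^ (-(2 * t - 1)) - ((n : ℝ) + 1 + ρ) ^ (-(2 * t - 1))) / (2 * t - 1) ≤
      side ρ t n ^ 2 := by
  have h0 : (0 : ℝ) < n := by exact_mod_cast hn
  have hN : 0 < (n : ℝ) + 1 + ρ := by linarith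
  have hN' : 0 < (n : ℝ) + ρ := by linarith
  rw [side_sq hρ, div_le_iff₀ (by linarith)]
  have h1 := one_sub_mul_le_rpow_neg (u := ((n : ℝ) + 1 + ρ) / (n + ρ)) (s := 2 * t - 1)
    (by positivity) (by linarith)
  rw [Real.div_rpow hN.le hN'.le, le_div_iff₀ (by positivity)] at h1
  have h2 : ((n : ℝ) + ρ) ^ (-(2 * t)) * (n + ρ) = ((n : ℝ) + ρ) ^ (-(2 * t - 1)) := by
    rw [← Real.rpow_add_one hN'.ne']; congr 1; ring
  have h3 : (n + 1 + ρ) / ((n : ℝ) + ρ) - 1 = 1 / ((n : ℝ) + ρ) := by field_simp; ring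
  rw [h3] at h1
  have h4 : (1 - (2 * t - 1) * (1 / ((n : ℝ) + ρ))) * ((n : ℝ) + ρ) ^ (-(2 * t - 1)) =
      ((n : ℝ) + ρ) ^ (-(2 * t - 1)) - (2 * t - 1) * ((n : ℝ) + ρ) ^ (-(2 * t)) := by
    rw [← h2]; field_simp
  linarith

lemma sum_side_sq_succ_le (ht : 1 / 2 < t) (hρ : 0 ≤ ρ) {n : ℕ} (hn : 0 < n) (k : ℕ) :
    ∑ i ∈ Finset.range k, side ρ t (n + i + 1) ^ 2 ≤
      ((n : ℝ) + ρ) ^ (-(2 * t - 1)) / (2 * t - 1) := by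
  have hp : 0 < 2 * t - 1 := by linarith
  have key : ∀ k : ℕ, ∑ i ∈ Finset.range k, side ρ t (n + i + 1) ^ 2 ≤
      (((n : ℝ) + ρ) ^ (-(2 * t - 1)) - ((n : ℝ) + k + ρ) ^ (-(2 * t - 1))) / (2 * t - 1) := by
    intro k
    induction k with
    | zero => simp
    | succ k ih =>
      rw [Finset.sum_range_succ]
      have := side_sq_le ht hρ (n := n + k) (by omega)
      push_cast at this ⊢
      refine (add_le_add ih this).trans (le_of_eq ?_)
      rw [← add_div, ← add_assoc (n : ℝ)]
      congr 1; ring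
  refine (key k).trans ?_
  gcongr
  have : (0 : ℝ) ≤ ((n : ℝ) + k + ρ) ^ (-(2 * t - 1)) := by positivity
  linarith

lemma summable_side_sq (ht : 1 / 2 < t) (hρ : 0 ≤ ρ) {n : ℕ} (hn : 0 < n) :
    Summable fun i : ℕ => side ρ t (n + i) ^ 2 := by
  rw [← summable_nat_add_iff 1]
  exact summable_of_sum_range_le (fun i => sq_nonneg _) (sum_side_sq_succ_le ht hρ hn)

lemma tailArea_eq_sum_add (ht : 1 / 2 < t) (hρ : 0 ≤ ρ) {n m : ℕ} (hn : 0 < n) (h : n ≤ m) :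
    tailArea ρ t n = ∑ i ∈ Finset.Ico n m, side ρ t i ^ 2 + tailArea ρ t m := by
  obtain ⟨k, rfl⟩ := Nat.exists_eq_add_of_le h
  unfold tailArea
  rw [← (summable_side_sq ht hρ hn).sum_add_tsum_nat_add k, Finset.sum_Ico_eq_sum_range]
  simp only [add_tsub_cancel_left, add_assoc, add_comm k]

lemma tailArea_le (ht : 1 / 2 < t) (ht1 : t < 1) (hρ : 0 ≤ ρ) {n : ℕ} (hn : 0 < n) :
    tailArea ρ t n ≤ 2 * ((n : ℝ) + ρ) ^ (-(2 * t - 1)) / (2 * t - 1) := by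
  have hp : 0 < 2 * t - 1 := by linarith
  have h0 : (1 : ℝ) ≤ n := by exact_mod_cast hn
  have hN : 0 < (n : ℝ) + ρ := by linarith
  unfold tailArea
  rw [(summable_side_sq ht hρ hn).tsum_eq_zero_add]
  have h1 : ∑' i : ℕ, side ρ t (n + (i + 1)) ^ 2 ≤
      ((n : ℝ) + ρ) ^ (-(2 * t - 1)) / (2 * t - 1) :=
    Real.tsum_le_of_sum_range_le (fun i => sq_nonneg _) (sum_side_sq_succ_le ht hρ hn)
  have h2 : side ρ t n ^ 2 ≤ ((n : ℝ) + ρ) ^ (-(2 * t - 1)) / (2 * t - 1) := by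
    rw [side_sq hρ, le_div_iff₀ hp]
    have h2 : ((n : ℝ) + ρ) ^ (-(2 * t)) * (n + ρ) = ((n : ℝ) + ρ) ^ (-(2 * t - 1)) := by
      rw [← Real.rpow_add_one hN.ne']; congr 1; ring
    rw [← h2]
    gcongr
    linarith
  simp only [add_zero]
  rw [mul_div_assoc, two_mul]
  exact add_le_add h2 h1

lemma le_tailArea (ht : 1 / 2 < t) (hρ : 0 ≤ ρ) {n : ℕ} (hn : 0 < n) :
    ((n : ℝ) + ρ) ^ (-(2 * t - 1)) / (2 * t - 1) ≤ tailArea ρ t n := by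
  have hp : 0 < 2 * t - 1 := by linarith
  have key : ∀ k : ℕ,
      (((n : ℝ) + ρ) ^ (-(2 * t - 1)) - ((k : ℝ) + (n + ρ)) ^ (-(2 * t - 1))) / (2 * t - 1) ≤
        ∑ i ∈ Finset.range k, side ρ t (n + i) ^ 2 := by
    intro k
    induction k with
    | zero => simp
    | succ k ih =>
      rw [Finset.sum_range_succ]
      have := le_side_sq ht hρ (n := n + k) (by omega)
      push_cast at this ⊢
      refine le_trans (le_of_eq ?_) (add_le_add ih this)
      rw [← add_div, show (k : ℝ) + 1 + (n + ρ) = n + k + 1 + ρ by ring,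
        show (k : ℝ) + (n + ρ) = n + k + ρ by ring]
      congr 1; ring
  have lim : Filter.Tendsto (fun k : ℕ => (((n : ℝ) + ρ) ^ (-(2 * t - 1)) -
      ((k : ℝ) + (n + ρ)) ^ (-(2 * t - 1))) / (2 * t - 1)) Filter.atTop
      (nhds ((((n : ℝ) + ρ) ^ (-(2 * t - 1)) - 0) / (2 * t - 1))) := by
    refine (tendsto_const_nhds.sub ?_).div_const _
    exact (tendsto_rpow_neg_atTop hp).comp
      (Filter.tendsto_atTop_add_const_right _ _ tendsto_natCast_atTop_atTop)
  rw [sub_zero] at lim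
  exact le_of_tendsto' lim fun k => (key k).trans
    ((summable_side_sq ht hρ hn).sum_le_tsum _ fun i _ => sq_nonneg _)

end TailSums

section Constants

variable {ρ t : ℝ}

/-- The least number of squares that must fit across a rectangle before it is used. -/
noncomputable def aspect (t : ℝ) : ℝ := 12 * 2 ^ (1 / (8 * (1 - t)))

/-- The coefficient in the bound for the total weight. -/
noncomputable def weightCoeff (t : ℝ) : ℝ := aspect t ^ (-t) / (2 * (2 * t - 1))

lemma twelve_le_aspect (ht1 : t < 1) : 12 ≤ aspect t := by
  have : (1 : ℝ) ≤ 2 ^ (1 / (8 * (1 - t))) :=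
    Real.one_le_rpow (by norm_num) (by have : 0 < 1 - t := by linarith
                                       positivity)
  unfold aspect; linarith

lemma thirteen_le_aspect_rpow (ht1 : t < 1) : (12 + 1 : ℝ) ≤ aspect t ^ (1 - t) * 12 := by
  have hδ : 0 < 1 - t := by linarith
  unfold aspect
  rw [Real.mul_rpow (by norm_num) (by positivity), ← Real.rpow_mul (by norm_num),
    show 1 / (8 * (1 - t)) * (1 - t) = 1 / 8 by field_simp]
  have h1 : (1 : ℝ) ≤ 12 ^ (1 - t) := Real.one_le_rpow (by norm_num) hδ.le
  have h2 : (13 / 12 : ℝ) ≤ 2 ^ (1 / 8 : ℝ) := by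
    rw [one_div, Real.le_rpow_inv_iff_of_pos (by norm_num) (by norm_num) (by norm_num)]
    norm_num
  have h3 : (0 : ℝ) < 2 ^ (1 / 8 : ℝ) := by positivity
  nlinarith

lemma sqrt_tailArea_le (ht : 1 / 2 < t) (ht1 : t < 1) (hρ : 0 ≤ ρ) {n : ℕ} (hn : 0 < n) :
    √(tailArea ρ t n) ≤ √(2 / ((2 * t - 1) * (n + ρ))) * ((n : ℝ) + ρ) ^ (1 - t) := by
  have hp : 0 < 2 * t - 1 := by linarith
  have h0 : (0 : ℝ) < n := by exact_mod_cast hn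
  have hN : 0 < (n : ℝ) + ρ := by linarith
  refine Real.sqrt_le_iff.2 ⟨by positivity, ?_⟩
  rw [mul_pow, Real.sq_sqrt (by positivity)]
  refine (tailArea_le ht ht1 hρ hn).trans (le_of_eq ?_)
  have : ((n : ℝ) + ρ) ^ (-(2 * t - 1)) * (n + ρ) = (((n : ℝ) + ρ) ^ (1 - t)) ^ 2 := by
    rw [← Real.rpow_add_one hN.ne', ← Real.rpow_natCast, ← Real.rpow_mul hN.le]
    congr 1; push_cast; ring
  rw [← this]
  field_simp

/-- Consequences of the largeness hypotheses which are used to run the packing algorithm. -/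
structure LargeEnough (t N : ℝ) : Prop where
  spread : 663552 < (2 * t - 1) * N
  pow : aspect t * 300 * 165888 ^ ((1 - t) / 2) ≤ 21 * 3 * (1 - t) ^ 2 * N ^ ((1 - t) / 2)
  aspect_sq : 4096 * aspect t ^ 2 ≤ N

lemma LargeEnough.sqrt_mul_rpow_le {n₀ n : ℕ} (ht : 1 / 2 < t) (ht1 : t < 1) (hρ : 0 ≤ ρ)
    (hn₀ : 0 < n₀) (h : n₀ ≤ n) :
    √(tailArea ρ t n₀) * ((n : ℝ) + ρ) ^ t ≤
      √(2 / ((2 * t - 1) * (n₀ + ρ))) * (n + ρ) := by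
  have h0 : (0 : ℝ) < n₀ := by exact_mod_cast hn₀
  have h1 : (n₀ : ℝ) ≤ n := by exact_mod_cast h
  have hN : 0 < (n : ℝ) + ρ := by linarith
  calc √(tailArea ρ t n₀) * ((n : ℝ) + ρ) ^ t
      ≤ (√(2 / ((2 * t - 1) * (n₀ + ρ))) * ((n₀ : ℝ) + ρ) ^ (1 - t)) * ((n : ℝ) + ρ) ^ t := by
        gcongr; exact sqrt_tailArea_le ht ht1 hρ hn₀
    _ ≤ (√(2 / ((2 * t - 1) * (n₀ + ρ))) * ((n : ℝ) + ρ) ^ (1 - t)) * ((n : ℝ) + ρ) ^ t := by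
        have : ((n₀ : ℝ) + ρ) ^ (1 - t) ≤ ((n : ℝ) + ρ) ^ (1 - t) :=
          Real.rpow_le_rpow (by linarith) (by linarith) (by linarith)
        gcongr
    _ = _ := by
        rw [mul_assoc, ← Real.rpow_add hN]
        simp

lemma LargeEnough.exists_count {n₀ n : ℕ} (ht : 1 / 2 < t) (ht1 : t < 1) (hρ : 0 ≤ ρ)
    (hn₀ : 0 < n₀) (hL : LargeEnough t (n₀ + ρ)) (h : n₀ ≤ n) :
    ∃ K : ℕ, (K : ℝ) * (12 : ℕ) ^ 2 ≤ n + ρ ∧ √(tailArea ρ t n₀) < K * (side ρ t n / 2) := by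
  have h0 : (0 : ℝ) < n₀ := by exact_mod_cast hn₀
  have h1 : (n₀ : ℝ) ≤ n := by exact_mod_cast h
  have hN : 0 < (n : ℝ) + ρ := by linarith
  have hs := hL.spread
  have hN₀ : 663552 < (n₀ : ℝ) + ρ := by nlinarith
  refine ⟨⌊((n : ℝ) + ρ) / 144⌋₊, ?_, ?_⟩
  · have := Nat.floor_le (a := ((n : ℝ) + ρ) / 144) (by positivity)
    push_cast
    linarith
  · have h2 := Nat.lt_floor_add_one (((n : ℝ) + ρ) / 144)
    have h3 : ((n : ℝ) + ρ) / 288 ≤ ⌊((n : ℝ) + ρ) / 144⌋₊ := by linarith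
    have h4 : √(2 / ((2 * t - 1) * (n₀ + ρ))) < 1 / 576 := by
      rw [Real.sqrt_lt' (by norm_num), div_lt_iff₀ (by linarith)]
      linarith
    have h5 := LargeEnough.sqrt_mul_rpow_le ht ht1 hρ hn₀ h
    have h6 : √(tailArea ρ t n₀) * ((n : ℝ) + ρ) ^ t < 1 / 576 * (n + ρ) :=
      h5.trans_lt (by gcongr)
    have h7 : ((n : ℝ) + ρ) ^ t * side ρ t n = 1 := by
      unfold side; rw [← Real.rpow_add hN]; simp
    have h8 : 0 < side ρ t n := side_pos hρ (by omega)
    calc √(tailArea ρ t n₀) = √(tailArea ρ t n₀) * ((n : ℝ) + ρ) ^ t * side ρ t n := by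
          rw [mul_assoc, h7, mul_one]
      _ < 1 / 576 * (n + ρ) * side ρ t n := by gcongr
      _ = (n + ρ) / 288 * (side ρ t n / 2) := by ring
      _ ≤ _ := by gcongr

lemma LargeEnough.loss_le {N : ℝ} (ht : 1 / 2 < t) (ht1 : t < 1) (hL : LargeEnough t N) {η : ℝ}
    (hη : 0 ≤ η) (hη1 : η ≤ 288 * √(2 / ((2 * t - 1) * N))) :
    (12 + 2) * η ^ (1 - t) ≤ weightCoeff t * (1 - t) ^ 2 * 12 / 2 := by
  have hp : 0 < 2 * t - 1 := by linarith
  have hδ : 0 < 1 - t := by linarith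
  have hN : 0 < N := by have := hL.spread; nlinarith
  have hW := twelve_le_aspect ht1
  have hW0 : 0 < aspect t := by linarith
  have h1 : η ^ (1 - t) ≤ (165888 / ((2 * t - 1) * N)) ^ ((1 - t) / 2) := by
    have h2 : η ^ 2 ≤ 165888 / ((2 * t - 1) * N) := by
      calc η ^ 2 ≤ (288 * √(2 / ((2 * t - 1) * N))) ^ 2 := by gcongr
        _ = _ := by rw [mul_pow, Real.sq_sqrt (by positivity)]; ring
    calc η ^ (1 - t) = (η ^ 2) ^ ((1 - t) / 2) := by
          rw [← Real.rpow_natCast, ← Real.rpow_mul hη]; congr 1; push_cast; ring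
      _ ≤ _ := Real.rpow_le_rpow (by positivity) h2 (by positivity)
  rw [Real.div_rpow (by norm_num) (by positivity), Real.mul_rpow hp.le hN.le,
    le_div_iff₀ (by positivity)] at h1
  have h3 : 2 * t - 1 ≤ (2 * t - 1) ^ ((1 - t) / 2) := by
    calc 2 * t - 1 = (2 * t - 1) ^ (1 : ℝ) := (Real.rpow_one _).symm
      _ ≤ _ := Real.rpow_le_rpow_of_exponent_ge hp (by linarith) (by linarith)
  have h4 : aspect t ^ t ≤ aspect t := by
    calc aspect t ^ t ≤ aspect t ^ (1 : ℝ) :=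
          Real.rpow_le_rpow_of_exponent_le (by linarith) ht1.le
      _ = _ := Real.rpow_one _
  have h5 := hL.pow
  have hX : 0 < N ^ ((1 - t) / 2) := by positivity
  have hY : 0 ≤ η ^ (1 - t) := by positivity
  have h6 : η ^ (1 - t) * (2 * t - 1) * N ^ ((1 - t) / 2) ≤ 165888 ^ ((1 - t) / 2) := by
    refine le_trans ?_ h1
    rw [← mul_assoc]
    gcongr
  have h7 : 14 * (η ^ (1 - t) * (2 * t - 1)) * aspect t ≤ 3 * (1 - t) ^ 2 := by
    have : 300 * aspect t * (η ^ (1 - t) * (2 * t - 1) * N ^ ((1 - t) / 2)) ≤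
        300 * aspect t * 165888 ^ ((1 - t) / 2) := by gcongr
    have h8 : (300 * aspect t * (η ^ (1 - t) * (2 * t - 1))) * N ^ ((1 - t) / 2) ≤
        (21 * 3 * (1 - t) ^ 2) * N ^ ((1 - t) / 2) := by linarith
    have h9 := le_of_mul_le_mul_right h8 hX
    nlinarith [mul_nonneg (mul_nonneg hY hp.le) hW0.le]
  unfold weightCoeff
  rw [Real.rpow_neg hW0.le]
  have h10 : 14 * (η ^ (1 - t) * (2 * t - 1)) * aspect t ^ t ≤ 3 * (1 - t) ^ 2 :=
    le_trans (by gcongr) h7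
  have hWt : 0 < aspect t ^ t := by positivity
  have e : (aspect t ^ t)⁻¹ / (2 * (2 * t - 1)) * (1 - t) ^ 2 * 12 / 2 =
      3 * (1 - t) ^ 2 / (aspect t ^ t * (2 * t - 1)) := by field_simp; ring
  rw [e, le_div_iff₀ (by positivity)]
  linarith

lemma weightCoeff_pos (ht : 1 / 2 < t) (ht1 : t < 1) : 0 < weightCoeff t := by
  have := twelve_le_aspect ht1
  have : 0 < 2 * t - 1 := by linarith
  unfold weightCoeff; positivity

lemma LargeEnough.growth {n₀ n k : ℕ} (ht : 1 / 2 < t) (ht1 : t < 1) (hρ : 0 ≤ ρ)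
    (hn₀ : 0 < n₀) (hL : LargeEnough t (n₀ + ρ)) (h : n₀ ≤ n)
    (hk : k * side ρ t n ≤ 2 * √(tailArea ρ t n₀)) (hkn : (k : ℝ) * (12 : ℕ) ^ 2 ≤ n + ρ) :
    weightCoeff t * ((n : ℝ) + ρ) ^ ((1 - t) ^ 2) +
        k * (((12 : ℕ) + 2) * (k * (12 : ℕ) ^ 2 / (n + ρ)) ^ (1 - t) *
          side ρ t n ^ (1 + (1 - t))) ≤
      weightCoeff t * (((n + k * 12 : ℕ) : ℝ) + ρ) ^ ((1 - t) ^ 2) := by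
  have h0 : (0 : ℝ) < n₀ := by exact_mod_cast hn₀
  have h1 : (n₀ : ℝ) ≤ n := by exact_mod_cast h
  have hN : 0 < (n : ℝ) + ρ := by linarith
  have hc := weightCoeff_pos ht ht1
  push_cast at hkn ⊢
  have hη : k * 12 ^ 2 / ((n : ℝ) + ρ) ≤ 288 * √(2 / ((2 * t - 1) * (n₀ + ρ))) := by
    have h5 := LargeEnough.sqrt_mul_rpow_le ht ht1 hρ hn₀ h
    have h7 : ((n : ℝ) + ρ) ^ t * side ρ t n = 1 := by
      unfold side; rw [← Real.rpow_add hN]; simp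
    rw [div_le_iff₀ hN]
    calc (k : ℝ) * 12 ^ 2 = 144 * (k * side ρ t n) * ((n : ℝ) + ρ) ^ t := by
          rw [mul_assoc, mul_assoc (k : ℝ), mul_comm (side ρ t n), h7]; ring
      _ ≤ 144 * (2 * √(tailArea ρ t n₀)) * ((n : ℝ) + ρ) ^ t := by gcongr
      _ = 288 * (√(tailArea ρ t n₀) * ((n : ℝ) + ρ) ^ t) := by ring
      _ ≤ 288 * (√(2 / ((2 * t - 1) * (n₀ + ρ))) * (n + ρ)) := by gcongr
      _ = _ := by ring
  have hloss := hL.loss_le ht ht1 (by positivity) hη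
  have hgrow := rpow_add_mul_le_rpow_add (N := n + ρ) (K := k * 12) (κ := (1 - t) ^ 2) hN
    (by positivity) (by nlinarith) (by positivity) (by nlinarith)
  have hpow : side ρ t n ^ (1 + (1 - t)) = ((n : ℝ) + ρ) ^ ((1 - t) ^ 2 - 1) := by
    unfold side
    rw [← Real.rpow_mul hN.le]; congr 1; ring
  rw [hpow]
  have hX : 0 < ((n : ℝ) + ρ) ^ ((1 - t) ^ 2 - 1) := by positivity
  have h2 : (k : ℝ) * ((12 + 2) * (k * 12 ^ 2 / (n + ρ)) ^ (1 - t) *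
      ((n : ℝ) + ρ) ^ ((1 - t) ^ 2 - 1)) ≤
      k * (weightCoeff t * (1 - t) ^ 2 * 12 / 2 * ((n : ℝ) + ρ) ^ ((1 - t) ^ 2 - 1)) := by
    gcongr
  have h3 := mul_le_mul_of_nonneg_left hgrow hc.le
  rw [show (n : ℝ) + k * 12 + ρ = n + ρ + k * 12 by ring]
  linarith

lemma LargeEnough.initial {n₀ : ℕ} (ht : 1 / 2 < t) (ht1 : t < 1) (hρ : 0 ≤ ρ)
    (hn₀ : 0 < n₀) (hL : LargeEnough t (n₀ + ρ)) :
    √(tailArea ρ t n₀) ^ (1 - t) * (√(tailArea ρ t n₀) + √(tailArea ρ t n₀)) ≤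
      weightCoeff t * ((n₀ : ℝ) + ρ) ^ ((1 - t) ^ 2) := by
  have hp : 0 < 2 * t - 1 := by linarith
  have h0 : (0 : ℝ) < n₀ := by exact_mod_cast hn₀
  have hW := twelve_le_aspect ht1
  have hW0 : 0 < aspect t := by linarith
  have hT := sqrt_tailArea_le ht ht1 hρ hn₀
  have hsq := hL.aspect_sq
  set N : ℝ := n₀ + ρ with hNdef
  have hN : 0 < N := by positivity
  set s := √(tailArea ρ t n₀) with hs
  have hs0 : 0 ≤ s := Real.sqrt_nonneg _
  have e1 : s ^ (1 - t) * (s + s) = 2 * s ^ (2 - t) := by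
    rw [show 2 - t = (1 - t) + 1 by ring, Real.rpow_add_one' hs0 (by linarith)]; ring
  have h1 : s ^ (2 - t) ≤ (2 / ((2 * t - 1) * N)) ^ ((2 - t) / 2) * N ^ ((1 - t) * (2 - t)) := by
    calc s ^ (2 - t) ≤ (√(2 / ((2 * t - 1) * N)) * N ^ (1 - t)) ^ (2 - t) :=
          Real.rpow_le_rpow hs0 hT (by linarith)
      _ = _ := by
          rw [Real.mul_rpow (by positivity) (by positivity), ← Real.rpow_mul hN.le,
            Real.sqrt_eq_rpow, ← Real.rpow_mul (by positivity)]
          congr 2; ring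
  have h2 : (2 / ((2 * t - 1) * N)) ^ ((2 - t) / 2) ≤
      2 / (2 * t - 1) * N ^ (-((2 - t) / 2)) := by
    rw [← div_div, div_eq_mul_inv (2 / (2 * t - 1)), Real.mul_rpow (by positivity) (by positivity),
      Real.inv_rpow hN.le, ← Real.rpow_neg hN.le]
    gcongr
    calc (2 / (2 * t - 1)) ^ ((2 - t) / 2) ≤ (2 / (2 * t - 1)) ^ (1 : ℝ) :=
          Real.rpow_le_rpow_of_exponent_le (by rw [le_div_iff₀ hp]; linarith) (by linarith)
      _ = _ := Real.rpow_one _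
  have h3 : s ^ (2 - t) ≤ 2 / (2 * t - 1) * (N ^ (-(t / 2)) * N ^ ((1 - t) ^ 2)) := by
    calc s ^ (2 - t) ≤ _ := h1
      _ ≤ 2 / (2 * t - 1) * N ^ (-((2 - t) / 2)) * N ^ ((1 - t) * (2 - t)) := by gcongr
      _ = _ := by
          rw [mul_assoc, ← Real.rpow_add hN, ← Real.rpow_add hN]
          congr 2; ring
  have h4 : 8 * aspect t ^ t ≤ N ^ (t / 2) := by
    calc 8 * aspect t ^ t ≤ 64 ^ t * aspect t ^ t := by
          gcongr
          calc (8 : ℝ) = 64 ^ (1 / 2 : ℝ) := by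
                rw [show (64 : ℝ) = 8 ^ (2 : ℝ) by norm_num, ← Real.rpow_mul (by norm_num)]
                norm_num
            _ ≤ _ := Real.rpow_le_rpow_of_exponent_le (by norm_num) ht.le
      _ = ((64 * aspect t) ^ 2) ^ (t / 2) := by
          rw [← Real.rpow_natCast, ← Real.rpow_mul (by positivity), ← Real.mul_rpow (by norm_num)
            hW0.le]
          congr 1; push_cast; ring
      _ ≤ _ := Real.rpow_le_rpow (by positivity) (by linarith) (by linarith)
  have h5 : 2 * (2 / (2 * t - 1)) * N ^ (-(t / 2)) ≤ weightCoeff t := by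
    unfold weightCoeff
    rw [Real.rpow_neg hN.le, Real.rpow_neg hW0.le]
    have e : 2 * (2 / (2 * t - 1)) * (N ^ (t / 2))⁻¹ = (N ^ (t / 2) / 8)⁻¹ / (2 * (2 * t - 1)) := by
      field_simp; ring
    rw [e]
    gcongr
    linarith
  rw [e1]
  have hX : 0 < N ^ ((1 - t) ^ 2) := by positivity
  calc 2 * s ^ (2 - t) ≤ 2 * (2 / (2 * t - 1) * (N ^ (-(t / 2)) * N ^ ((1 - t) ^ 2))) := by gcongr
    _ = 2 * (2 / (2 * t - 1)) * N ^ (-(t / 2)) * N ^ ((1 - t) ^ 2) := by ring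
    _ ≤ _ := by gcongr

end Constants

section Packing

variable {ρ t : ℝ} {n₀ : ℕ}

/-- A stage of the packing algorithm: the squares with indices in `[n₀, next)` have been placed in
the big square, and the uncovered part is partitioned into the finitely many boxes `boxes`. -/
structure PartialPacking (ρ t : ℝ) (n₀ : ℕ) where
  next : ℕ
  pos : ℕ → ℝ × ℝ
  boxes : Multiset Box
  le_next : n₀ ≤ next
  bounds : ∀ R ∈ boxes, 0 ≤ R.width ∧ R.width ≤ √(tailArea ρ t n₀) ∧
    0 ≤ R.height ∧ R.height ≤ √(tailArea ρ t n₀)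
  ind_eq : ∀ z, (⟨(0, 0), √(tailArea ρ t n₀), √(tailArea ρ t n₀)⟩ : Box).ind z =
    ∑ i ∈ Finset.Ico n₀ next, (⟨pos i, side ρ t i, side ρ t i⟩ : Box).ind z +
      (boxes.map fun R => R.ind z).sum
  area_eq : (boxes.map Box.area).sum = tailArea ρ t next
  weight_le : (boxes.map (Box.weight (1 - t))).sum ≤
    weightCoeff t * ((next : ℝ) + ρ) ^ ((1 - t) ^ 2)

/-- The initial stage of the packing algorithm. -/
noncomputable def PartialPacking.init (ht : 1 / 2 < t) (ht1 : t < 1) (hρ : 0 ≤ ρ) (hn₀ : 0 < n₀)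
    (hL : LargeEnough t (n₀ + ρ)) : PartialPacking ρ t n₀ where
  next := n₀
  pos := 0
  boxes := {⟨(0, 0), √(tailArea ρ t n₀), √(tailArea ρ t n₀)⟩}
  le_next := le_rfl
  bounds := by simp
  ind_eq := by simp
  area_eq := by
    simp only [Multiset.map_singleton, Multiset.sum_singleton, Box.area]
    exact Real.mul_self_sqrt (tsum_nonneg fun i => sq_nonneg _)
  weight_le := by simpa [Box.weight] using hL.initial ht ht1 hρ hn₀

lemma Box.area_le_of_min_le {R : Box} {δ y : ℝ} (hδ : δ ≤ 1) (hw : 0 ≤ R.width)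
    (hh : 0 ≤ R.height) (h : min R.width R.height ≤ y) :
    R.area ≤ y ^ (1 - δ) * R.weight δ := by
  set m := min R.width R.height with hm
  have hm0 : 0 ≤ m := le_min hw hh
  have e : R.area = m * max R.width R.height := (min_mul_max _ _).symm
  have h1 : max R.width R.height ≤ R.width + R.height := max_le (by linarith) (by linarith)
  have h2 : m ≤ y ^ (1 - δ) * m ^ δ := by
    calc m = m ^ (1 - δ) * m ^ δ := by
          rw [← Real.rpow_add' hm0 (by simp)]; simp
      _ ≤ _ := by
          have := Real.rpow_le_rpow hm0 h (show 0 ≤ 1 - δ by linarith)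
          gcongr
  rw [e]
  calc m * max R.width R.height ≤ (y ^ (1 - δ) * m ^ δ) * (R.width + R.height) := by
        have : 0 ≤ y := hm0.trans h
        gcongr
    _ = _ := by unfold Box.weight; ring

lemma PartialPacking.exists_wide_box (ht : 1 / 2 < t) (ht1 : t < 1) (hρ : 0 ≤ ρ) (hn₀ : 0 < n₀)
    (S : PartialPacking ρ t n₀) :
    ∃ R ∈ S.boxes, aspect t * side ρ t S.next ≤ min R.width R.height := by
  by_contra! hcon
  have hp : 0 < 2 * t - 1 := by linarith
  have hm : 0 < S.next := hn₀.trans_le S.le_next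
  have h0 : (0 : ℝ) < S.next := by exact_mod_cast hm
  have hN : 0 < (S.next : ℝ) + ρ := by linarith
  have hW : 0 < aspect t := by linarith [twelve_le_aspect ht1]
  have hx := side_pos (t := t) hρ hm
  have h1 : (S.boxes.map Box.area).sum ≤
      (aspect t * side ρ t S.next) ^ t * (S.boxes.map (Box.weight (1 - t))).sum := by
    rw [← Multiset.sum_map_mul_left]
    refine Multiset.sum_map_le_sum_map _ _ fun R hR => ?_
    have := Box.area_le_of_min_le (δ := 1 - t) (by linarith) (S.bounds R hR).1
      (S.bounds R hR).2.2.1 (hcon R hR).le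
    simpa using this
  rw [S.area_eq] at h1
  have h2 := le_tailArea (t := t) (ρ := ρ) ht hρ hm
  have h3 : (aspect t * side ρ t S.next) ^ t * (S.boxes.map (Box.weight (1 - t))).sum ≤
      (aspect t * side ρ t S.next) ^ t * (weightCoeff t * ((S.next : ℝ) + ρ) ^ ((1 - t) ^ 2)) := by
    gcongr
    exact S.weight_le
  have h4 : (aspect t * side ρ t S.next) ^ t *
      (weightCoeff t * ((S.next : ℝ) + ρ) ^ ((1 - t) ^ 2)) =
      ((S.next : ℝ) + ρ) ^ (-(2 * t - 1)) / (2 * t - 1) / 2 := by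
    unfold weightCoeff side
    rw [Real.mul_rpow hW.le (by positivity), ← Real.rpow_mul hN.le,
      show -(2 * t - 1) = -t * t + (1 - t) ^ 2 by ring, Real.rpow_add hN, Real.rpow_neg hW.le]
    have : aspect t ^ t ≠ 0 := by positivity
    field_simp
  have h5 : 0 < ((S.next : ℝ) + ρ) ^ (-(2 * t - 1)) / (2 * t - 1) := by positivity
  linarith

lemma PartialPacking.exists_next (ht : 1 / 2 < t) (ht1 : t < 1) (hρ : 0 ≤ ρ) (hn₀ : 0 < n₀)
    (hL : LargeEnough t (n₀ + ρ)) (S : PartialPacking ρ t n₀) :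
    ∃ S' : PartialPacking ρ t n₀, S.next < S'.next ∧ ∀ i < S.next, S'.pos i = S.pos i := by
  obtain ⟨R, hR, hwide⟩ := S.exists_wide_box ht ht1 hρ hn₀
  have hm : 0 < S.next := hn₀.trans_le S.le_next
  obtain ⟨K, hK, hK'⟩ := hL.exists_count ht ht1 hρ hn₀ S.le_next
  obtain ⟨hw0, hw1, hh0, hh1⟩ := S.bounds R hR
  have hmin : min R.width R.height ≤ √(tailArea ρ t n₀) := (min_le_left _ _).trans hw1
  obtain ⟨k, hk0, hk1, hk2, hfill⟩ := fillable_step (δ := 1 - t) (H := 12) (by linarith) hρ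
    (by linarith) ht1.le hm (by norm_num) (by exact_mod_cast twelve_le_aspect ht1)
    (by exact_mod_cast thirteen_le_aspect_rpow ht1) hwide hK (hmin.trans_lt hK')
  have hgrow := hL.growth ht ht1 hρ hn₀ S.le_next (hk1.trans (by linarith)) hk2
  obtain ⟨hle, hpos⟩ := hfill
  obtain ⟨pos, L, hb, hind, harea, hweight⟩ := hpos R.corner
  obtain ⟨L', hcons⟩ := Multiset.exists_cons_of_mem hR
  have hlt : S.next < S.next + k * 12 := by omega
  refine ⟨⟨S.next + k * 12, fun i => if i < S.next then S.pos i else pos i, L + L',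
    S.le_next.trans hle, ?_, ?_, ?_, ?_⟩, hlt, fun i hi => if_pos hi⟩
  · intro Q hQ
    rcases Multiset.mem_add.1 hQ with hQ | hQ
    · obtain ⟨c1, c2, c3, c4⟩ := hb Q hQ
      exact ⟨c1, c2.trans hw1, c3, c4.trans hh1⟩
    · exact S.bounds Q (hcons ▸ Multiset.mem_cons_of_mem hQ)
  · intro z
    have e1 := S.ind_eq z
    rw [hcons, Multiset.map_cons, Multiset.sum_cons] at e1
    have e2 : R.ind z = _ := hind z
    rw [e1, e2, ← Finset.sum_Ico_consecutive _ S.le_next hle, Multiset.map_add, Multiset.sum_add]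
    have e3 : ∑ i ∈ Finset.Ico n₀ S.next, (⟨if i < S.next then S.pos i else pos i,
        side ρ t i, side ρ t i⟩ : Box).ind z =
        ∑ i ∈ Finset.Ico n₀ S.next, (⟨S.pos i, side ρ t i, side ρ t i⟩ : Box).ind z :=
      Finset.sum_congr rfl fun i hi => by rw [if_pos (Finset.mem_Ico.1 hi).2]
    have e4 : ∑ i ∈ Finset.Ico S.next (S.next + k * 12),
        (⟨if i < S.next then S.pos i else pos i, side ρ t i, side ρ t i⟩ : Box).ind z =
        ∑ i ∈ Finset.Ico S.next (S.next + k * 12),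
          (⟨pos i, side ρ t i, side ρ t i⟩ : Box).ind z :=
      Finset.sum_congr rfl fun i hi => by rw [if_neg (by have := Finset.mem_Ico.1 hi; omega)]
    rw [e3, e4]
    ring
  · have e1 := S.area_eq
    rw [hcons, Multiset.map_cons, Multiset.sum_cons, tailArea_eq_sum_add ht hρ hm hle] at e1
    have e2 : R.area = R.width * R.height := rfl
    rw [Multiset.map_add, Multiset.sum_add]
    linarith
  · have e1 := S.weight_le
    rw [hcons, Multiset.map_cons, Multiset.sum_cons] at e1
    have e2 : R.weight (1 - t) = min R.width R.height ^ (1 - t) * (R.width + R.height) := rfl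
    rw [Multiset.map_add, Multiset.sum_add]
    linarith

theorem exists_packing (ht : 1 / 2 < t) (ht1 : t < 1) (hρ : 0 ≤ ρ) (hn₀ : 0 < n₀)
    (hL : LargeEnough t (n₀ + ρ)) :
    ∃ pos : ℕ → ℝ × ℝ, ∀ m z, ∑ i ∈ Finset.Ico n₀ m,
      (⟨pos i, side ρ t i, side ρ t i⟩ : Box).ind z ≤
        (⟨(0, 0), √(tailArea ρ t n₀), √(tailArea ρ t n₀)⟩ : Box).ind z := by
  choose f hf hf' using PartialPacking.exists_next (n₀ := n₀) ht ht1 hρ hn₀ hL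
  let S : ℕ → PartialPacking ρ t n₀ :=
    fun j => f^[j] (PartialPacking.init ht ht1 hρ hn₀ hL)
  have hS : ∀ j, S (j + 1) = f (S j) := fun j => Function.iterate_succ_apply' f j _
  have hnext : ∀ j, j ≤ (S j).next := by
    intro j
    induction j with
    | zero => exact Nat.zero_le _
    | succ j ih => rw [hS]; exact ih.trans_lt (hf _)
  have hmono : Monotone fun j => (S j).next :=
    monotone_nat_of_le_succ fun j => by rw [hS]; exact (hf _).le
  have hpos : ∀ i j, i < (S j).next → ∀ l, j ≤ l → (S l).pos i = (S j).pos i := by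
    intro i j hij l hl
    induction l, hl using Nat.le_induction with
    | base => rfl
    | succ l hl ih => rw [hS, hf' _ _ (hij.trans_le (hmono hl)), ih]
  refine ⟨fun i => (S (i + 1)).pos i, fun m z => ?_⟩
  rw [(S m).ind_eq z]
  refine le_trans ?_ (Nat.le_add_right _ _)
  calc ∑ i ∈ Finset.Ico n₀ m, (⟨(S (i + 1)).pos i, side ρ t i, side ρ t i⟩ : Box).ind z
      = ∑ i ∈ Finset.Ico n₀ m, (⟨(S m).pos i, side ρ t i, side ρ t i⟩ : Box).ind z := by
        refine Finset.sum_congr rfl fun i hi => ?_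
        rw [hpos i (i + 1) (hnext (i + 1)) m (Finset.mem_Ico.1 hi).2]
    _ ≤ _ := Finset.sum_le_sum_of_subset (Finset.Ico_subset_Ico_right (hnext m))

lemma Box.subset_of_ind_le {R Q : Box} (h : ∀ z, R.ind z ≤ Q.ind z) : R.toSet ⊆ Q.toSet := by
  intro z hz
  by_contra hz'
  have := h z
  rw [ind_of_mem hz, ind_of_notMem hz'] at this
  omega

theorem exists_disjoint_packing (ht : 1 / 2 < t) (ht1 : t < 1) (hρ : 0 ≤ ρ) (hn₀ : 0 < n₀)
    (hL : LargeEnough t (n₀ + ρ)) :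
    ∃ pos : ℕ → ℝ × ℝ,
      (∀ i, n₀ ≤ i → (⟨pos i, side ρ t i, side ρ t i⟩ : Box).toSet ⊆
        (⟨(0, 0), √(tailArea ρ t n₀), √(tailArea ρ t n₀)⟩ : Box).toSet) ∧
      (∀ i j, n₀ ≤ i → n₀ ≤ j → i ≠ j → Disjoint (⟨pos i, side ρ t i, side ρ t i⟩ : Box).toSet
        (⟨pos j, side ρ t j, side ρ t j⟩ : Box).toSet) := by
  obtain ⟨pos, hpos⟩ := exists_packing ht ht1 hρ hn₀ hL
  refine ⟨pos, fun i hi => Box.subset_of_ind_le fun z => ?_, fun i j hi hj hij => ?_⟩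
  · refine le_trans ?_ (hpos (i + 1) z)
    exact Finset.single_le_sum (f := fun i => (⟨pos i, side ρ t i, side ρ t i⟩ : Box).ind z)
      (fun _ _ => Nat.zero_le _) (Finset.mem_Ico.2 ⟨hi, by omega⟩)
  · rw [Set.disjoint_left]
    intro z hz hz'
    have h1 : ∑ l ∈ {i, j}, (⟨pos l, side ρ t l, side ρ t l⟩ : Box).ind z ≤ 1 := by
      refine le_trans ?_ ((hpos (max i j + 1) z).trans (Box.ind_le_one _ z))
      refine Finset.sum_le_sum_of_subset fun l hl => ?_
      simp only [Finset.mem_insert, Finset.mem_singleton] at hl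
      rw [Finset.mem_Ico]
      omega
    rw [Finset.sum_pair hij, Box.ind_of_mem hz, Box.ind_of_mem hz'] at h1
    omega

end Packing

section Hypotheses

variable {t : ℝ}

lemma le_rpow_half_of_rpow_le {δ x M : ℝ} (hδ : 0 < δ) (hx : 0 ≤ x) (h : x ^ (2 / δ) ≤ M) :
    x ≤ M ^ (δ / 2) := by
  calc x = (x ^ (2 / δ)) ^ (δ / 2) := by
        rw [← Real.rpow_mul hx, show 2 / δ * (δ / 2) = 1 by field_simp, Real.rpow_one]
    _ ≤ _ := Real.rpow_le_rpow (by positivity) h (by positivity)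

lemma fifty_rpow_le {M : ℝ} (ht : 1 / 2 < t) (ht1 : t < 1)
    (h : (50 * ((11 : ℝ) / 10) ^ (t * (2 - t))) ^ (2 / (1 - t)) ≤ M) :
    50 ^ (2 / (1 - t)) ≤ M := by
  have hδ : 0 < 1 - t := by linarith
  refine le_trans (Real.rpow_le_rpow (by norm_num) ?_ (by positivity)) h
  have := Real.one_le_rpow (show (1 : ℝ) ≤ 11 / 10 by norm_num) (show 0 ≤ t * (2 - t) by nlinarith)
  linarith

lemma inv_sq_rpow_le {M : ℝ} (ht : 1 / 2 < t) (ht1 : t < 1) (h50 : 50 ^ (2 / (1 - t)) ≤ M)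
    (h : (4 : ℝ) ^ ((1 : ℝ) / (1 - t)) * (2 * (2 * t - 1) / (1 - t) ^ 2) ^ (2 / (t * (1 - t))) ≤ M) :
    (1 / (1 - t) ^ 2) ^ (2 / (1 - t)) ≤ M := by
  have hδ : 0 < 1 - t := by linarith
  have ht0 : 0 < t := by linarith
  rcases le_total (3 / 4) t with h34 | h34
  · have h1 : (1 : ℝ) ≤ 1 / (1 - t) ^ 2 := by
      rw [le_div_iff₀ (by positivity)]; nlinarith
    have h4 : (1 : ℝ) ≤ 4 ^ ((1 : ℝ) / (1 - t)) := Real.one_le_rpow (by norm_num) (by positivity)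
    have hle : 2 / (1 - t) ≤ 2 / (t * (1 - t)) := by
      gcongr
      nlinarith
    calc (1 / (1 - t) ^ 2) ^ (2 / (1 - t)) ≤ (1 / (1 - t) ^ 2) ^ (2 / (t * (1 - t))) :=
          Real.rpow_le_rpow_of_exponent_le h1 hle
      _ ≤ (2 * (2 * t - 1) / (1 - t) ^ 2) ^ (2 / (t * (1 - t))) := by
          gcongr
          linarith
      _ ≤ _ := le_mul_of_one_le_left (by
          have : 0 ≤ 2 * t - 1 := by linarith
          positivity) h4
      _ ≤ M := h
  · refine le_trans (Real.rpow_le_rpow (by positivity) ?_ (by positivity)) h50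
    rw [div_le_iff₀ (by positivity)]
    nlinarith

lemma rpow_bound_simplify {q κ M : ℝ} (ht : 1 / 2 < t) (ht1 : t < 1) (hq : 0 < q) (hκ : 0 ≤ κ)
    (hκt : 2 * t - 1 ≤ 4 * κ) (hM : 1 ≤ M) :
    8 * κ ^ 2 * M ^ 2 ≤ (2 * t - 1) * (q⁻¹ * (2 * q * κ) ^ (2 / t) *
      (2 / (q * (2 * t - 1))) ^ ((2 - t) / t) * M ^ ((1 + t) / t)) := by
  have hp : 0 < 2 * t - 1 := by linarith
  have ht0 : 0 < t := by linarith
  have hA1 : 1 ≤ 4 * κ / (2 * t - 1) := by rwa [le_div_iff₀ hp, one_mul]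
  have hA : (4 * κ / (2 * t - 1)) ^ 2 ≤ (4 * κ / (2 * t - 1)) ^ (2 / t) := by
    rw [← Real.rpow_natCast]
    refine Real.rpow_le_rpow_of_exponent_le hA1 ?_
    rw [le_div_iff₀ ht0]; push_cast; linarith
  have hM2 : M ^ 2 ≤ M ^ ((1 + t) / t) := by
    rw [← Real.rpow_natCast]
    refine Real.rpow_le_rpow_of_exponent_le hM ?_
    rw [le_div_iff₀ ht0]; push_cast; linarith
  have e1 : (2 * q * κ) ^ (2 / t) =
      (4 * κ / (2 * t - 1)) ^ (2 / t) * (q * (2 * t - 1) / 2) ^ (2 / t) := by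
    rw [← Real.mul_rpow (by positivity) (by positivity)]
    congr 1; field_simp; ring
  have e2 : (q * (2 * t - 1) / 2) ^ (2 / t) * (2 / (q * (2 * t - 1))) ^ ((2 - t) / t) =
      q * (2 * t - 1) / 2 := by
    rw [show 2 / (q * (2 * t - 1)) = (q * (2 * t - 1) / 2)⁻¹ by rw [inv_div],
      Real.inv_rpow (by positivity), ← Real.rpow_neg (by positivity),
      ← Real.rpow_add (by positivity), show 2 / t + -((2 - t) / t) = 1 by field_simp; ring,
      Real.rpow_one]
  have e3 : (2 * t - 1) * (q⁻¹ * (2 * q * κ) ^ (2 / t) *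
      (2 / (q * (2 * t - 1))) ^ ((2 - t) / t) * M ^ ((1 + t) / t)) =
      (2 * t - 1) ^ 2 / 2 * (4 * κ / (2 * t - 1)) ^ (2 / t) * M ^ ((1 + t) / t) := by
    rw [e1]
    calc _ = (2 * t - 1) * (q⁻¹ * (4 * κ / (2 * t - 1)) ^ (2 / t) * ((q * (2 * t - 1) / 2) ^ (2 / t)
          * (2 / (q * (2 * t - 1))) ^ ((2 - t) / t)) * M ^ ((1 + t) / t)) := by ring
      _ = _ := by rw [e2]; field_simp
  rw [e3]
  calc 8 * κ ^ 2 * M ^ 2 = (2 * t - 1) ^ 2 / 2 * (4 * κ / (2 * t - 1)) ^ 2 * M ^ 2 := by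
        field_simp; ring
    _ ≤ _ := by gcongr

lemma largeEnough_of_le {M N : ℝ} (ht : 1 / 2 < t) (ht1 : t < 1)
    (h50 : 50 ^ (2 / (1 - t)) ≤ M) (hinv : (1 / (1 - t) ^ 2) ^ (2 / (1 - t)) ≤ M)
    (hN : 4752 * M ^ 4 ≤ N) (hN2 : 2 ^ (1 / (1 - t) ^ 2) ≤ N)
    (hspread : 2 * t - 1 ≤ 4 * (1 - t) ^ 2 → 8 * ((1 - t) ^ 2) ^ 2 * M ^ 2 ≤ (2 * t - 1) * N) :
    LargeEnough t N := by
  have hδ : 0 < 1 - t := by linarith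
  have hM50 : (50 : ℝ) ^ 4 ≤ M := by
    refine le_trans ?_ h50
    rw [← Real.rpow_natCast]
    refine Real.rpow_le_rpow_of_exponent_le (by norm_num) ?_
    rw [le_div_iff₀ hδ]; push_cast; linarith
  have hM0 : 0 < M := by linarith [show (0 : ℝ) < 50 ^ 4 by norm_num]
  have hM4 : (50 ^ 4) ^ 4 ≤ M ^ 4 := by gcongr
  have hN0 : 0 < N := by linarith [show (0 : ℝ) < (50 ^ 4) ^ 4 by norm_num]
  refine ⟨?_, ?_, ?_⟩
  · rcases le_total (2 * t - 1) (1 / 4) with h | h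
    · have hκ : 9 / 64 ≤ (1 - t) ^ 2 := by nlinarith
      refine lt_of_lt_of_le ?_ (hspread (by linarith))
      have h1 : (9 / 64 : ℝ) ^ 2 ≤ ((1 - t) ^ 2) ^ 2 := by gcongr
      have h2 : ((50 : ℝ) ^ 4) ^ 2 ≤ M ^ 2 := by gcongr
      calc (663552 : ℝ) < 8 * (9 / 64) ^ 2 * (50 ^ 4) ^ 2 := by norm_num
        _ ≤ _ := by gcongr
    · have : 1 / 4 * N ≤ (2 * t - 1) * N := by gcongr
      norm_num at hM4
      linarith
  · set u := M ^ ((1 - t) / 2) with hu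
    have hu50 : 50 ≤ u := le_rpow_half_of_rpow_le hδ (by norm_num) h50
    have huκ : 1 ≤ (1 - t) ^ 2 * u := by
      have := le_rpow_half_of_rpow_le hδ (by positivity) hinv
      rwa [div_le_iff₀ (by positivity), mul_comm] at this
    have h1 : 2 ^ (1 / (8 * (1 - t))) ≤ N ^ ((1 - t) / 8) := by
      calc (2 : ℝ) ^ (1 / (8 * (1 - t))) = (2 ^ (1 / (1 - t) ^ 2)) ^ ((1 - t) / 8) := by
            rw [← Real.rpow_mul (by norm_num)]; congr 1; field_simp
        _ ≤ _ := Real.rpow_le_rpow (by positivity) hN2 (by positivity)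
    have h2 : u ^ 3 ≤ N ^ (3 * (1 - t) / 8) := by
      calc u ^ 3 = (M ^ 4) ^ (3 * (1 - t) / 8) := by
            rw [hu, ← Real.rpow_natCast, ← Real.rpow_natCast, ← Real.rpow_mul hM0.le,
              ← Real.rpow_mul hM0.le]
            congr 1; push_cast; ring
        _ ≤ _ := Real.rpow_le_rpow (by positivity) (by linarith [pow_pos hM0 4]) (by positivity)
    have h3 : N ^ ((1 - t) / 2) = N ^ ((1 - t) / 8) * N ^ (3 * (1 - t) / 8) := by
      rw [← Real.rpow_add hN0]; congr 1; ring
    have h4 : (165888 : ℝ) ^ ((1 - t) / 2) ≤ 21 := by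
      calc (165888 : ℝ) ^ ((1 - t) / 2) ≤ (21 ^ (4 : ℝ)) ^ (1 / 4 : ℝ) := by
            refine (Real.rpow_le_rpow_of_exponent_le (by norm_num)
              (show (1 - t) / 2 ≤ 1 / 4 by linarith)).trans ?_
            exact Real.rpow_le_rpow (by norm_num) (by norm_num) (by norm_num)
        _ = 21 := by rw [← Real.rpow_mul (by norm_num)]; norm_num
    have h5 : 2500 ≤ (1 - t) ^ 2 * u ^ 3 := by
      calc (2500 : ℝ) ≤ u ^ 2 := by nlinarith
        _ ≤ (1 - t) ^ 2 * u * u ^ 2 := le_mul_of_one_le_left (by positivity) huκ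
        _ = _ := by ring
    have hX : (0 : ℝ) < 2 ^ (1 / (8 * (1 - t))) := by positivity
    calc aspect t * 300 * 165888 ^ ((1 - t) / 2)
        ≤ 12 * 2 ^ (1 / (8 * (1 - t))) * 300 * 21 := by unfold aspect; gcongr
      _ ≤ 21 * 3 * 2 ^ (1 / (8 * (1 - t))) * ((1 - t) ^ 2 * u ^ 3) := by nlinarith
      _ = 21 * 3 * (1 - t) ^ 2 * (2 ^ (1 / (8 * (1 - t))) * u ^ 3) := by ring
      _ ≤ 21 * 3 * (1 - t) ^ 2 * (N ^ ((1 - t) / 8) * N ^ (3 * (1 - t) / 8)) := by gcongr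
      _ = _ := by rw [h3]
  · have h1 : ((2 : ℝ) ^ (1 / (8 * (1 - t)))) ^ 2 ≤ M := by
      refine le_trans ?_ h50
      rw [← Real.rpow_natCast, ← Real.rpow_mul (by norm_num)]
      refine (Real.rpow_le_rpow_of_exponent_le (y := 1 / (8 * (1 - t)) * (2 : ℕ)) (z := 2 / (1 - t))
        (by norm_num) ?_).trans (Real.rpow_le_rpow (by norm_num) (by norm_num) (by positivity))
      rw [div_mul_eq_mul_div, div_le_div_iff₀ (by positivity) hδ]
      push_cast; linarith
    have h2 : (50 ^ 4) ^ 3 * M ≤ M ^ 4 := by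
      calc (50 ^ 4) ^ 3 * M ≤ M ^ 3 * M := by gcongr
        _ = M ^ 4 := by ring
    unfold aspect
    norm_num at h2
    rw [mul_pow]
    linarith

end Hypotheses

section Measure

lemma Box.measurableSet_toSet (R : Box) : MeasurableSet R.toSet :=
  measurableSet_Ico.prod measurableSet_Ico

lemma Box.volume_toSet_square (c : ℝ × ℝ) {s : ℝ} (hs : 0 ≤ s) :
    volume (⟨c, s, s⟩ : Box).toSet = ENNReal.ofReal (s ^ 2) := by
  simp [toSet, Measure.volume_eq_prod, Measure.prod_prod, sq, ENNReal.ofReal_mul hs]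

lemma volume_square (c : ℝ × ℝ) {s : ℝ} (hs : 0 ≤ s) :
    volume (square c s) = ENNReal.ofReal (s ^ 2) := by
  rw [square, Measure.volume_eq_prod, Measure.prod_prod, Real.volume_Icc, Real.volume_Icc]
  simp [sq, ENNReal.ofReal_mul hs]

lemma Box.toSet_subset_square (c : ℝ × ℝ) (s : ℝ) : (⟨c, s, s⟩ : Box).toSet ⊆ square c s :=
  Set.prod_mono Ico_subset_Icc_self Ico_subset_Icc_self

lemma interior_square_subset (c : ℝ × ℝ) (s : ℝ) :
    interior (square c s) ⊆ (⟨c, s, s⟩ : Box).toSet := by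
  rw [square, interior_prod_eq, interior_Icc, interior_Icc]
  exact Set.prod_mono Ioo_subset_Ico_self Ioo_subset_Ico_self

lemma Box.closure_toSet (c : ℝ × ℝ) {s : ℝ} (hs : 0 < s) :
    closure (⟨c, s, s⟩ : Box).toSet = square c s := by
  rw [toSet, closure_prod_eq, closure_Ico (by simpa using hs.ne'), closure_Ico (by simpa using hs.ne')]
  rfl

lemma perfectlyPacked_of_boxes {ι : Type*} [Countable ι] {c : ℝ × ℝ} {s : ℝ} (hs : 0 ≤ s)
    {pos : ι → ℝ × ℝ} {x : ι → ℝ} (hx : ∀ i, 0 < x i)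
    (hsub : ∀ i, (⟨pos i, x i, x i⟩ : Box).toSet ⊆ (⟨c, s, s⟩ : Box).toSet)
    (hdisj : Pairwise fun i j =>
      Disjoint (⟨pos i, x i, x i⟩ : Box).toSet (⟨pos j, x j, x j⟩ : Box).toSet)
    (hsum : HasSum (fun i => x i ^ 2) (s ^ 2)) :
    PerfectlyPacked (fun i => square (pos i) (x i)) (square c s) := by
  refine ⟨fun i => ?_, fun i j hij => ?_, ?_⟩
  · change square (pos i) (x i) ⊆ _
    rw [← Box.closure_toSet _ (hx i)]
    exact closure_minimal ((hsub i).trans (Box.toSet_subset_square c s))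
      (isClosed_Icc.prod isClosed_Icc)
  · exact (hdisj hij).mono (interior_square_subset _ _) (interior_square_subset _ _)
  · have hvol : volume (⋃ i, (⟨pos i, x i, x i⟩ : Box).toSet) = ENNReal.ofReal (s ^ 2) := by
      rw [measure_iUnion hdisj fun i => Box.measurableSet_toSet _, ← hsum.tsum_eq,
        ENNReal.ofReal_tsum_of_nonneg (fun i => sq_nonneg _) hsum.summable]
      exact tsum_congr fun i => Box.volume_toSet_square _ (hx i).le
    refine measure_mono_null (sdiff_subset_sdiff_right (iUnion_mono fun i =>
      Box.toSet_subset_square (pos i) (x i))) ?_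
    rw [measure_sdiff (iUnion_subset fun i => (hsub i).trans (Box.toSet_subset_square c s))
      (MeasurableSet.iUnion fun i => Box.measurableSet_toSet _).nullMeasurableSet
      (by rw [hvol]; exact ENNReal.ofReal_ne_top), hvol, volume_square c hs, tsub_self]

lemma Box.toSet_smul {σ : ℝ} (hσ : 0 < σ) (R : Box) :
    (⟨σ • R.corner, σ * R.width, σ * R.height⟩ : Box).toSet = (fun z => σ⁻¹ • z) ⁻¹' R.toSet := by
  have h1 : ∀ a y : ℝ, σ * a ≤ y ↔ a ≤ σ⁻¹ * y := fun a y => (le_inv_mul_iff₀ hσ).symm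
  have h2 : ∀ a w y : ℝ, y < σ * a + σ * w ↔ σ⁻¹ * y < a + w := fun a w y => by
    rw [inv_mul_lt_iff₀ hσ, mul_add]
  ext z
  simp [toSet, h1, h2]

end Measure

theorem perfect_packing_AP_harmonic
    (t δ q r : ℝ) (ht₁ : 1 / 2 < t) (ht₂ : t < 1) (hδ : δ = 1 - t)
    (hqr : q > r) (hr : 0 ≤ r)
    (M N₀ : ℕ) (hM : 0 < M) (hN₀ : 0 < N₀)
    (hMbig : (M : ℝ) ≥
      max ((4 : ℝ) ^ ((1 : ℝ) / (1 - t)) *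
          (2 * (2 * t - 1) / (1 - t - δ * t)) ^ (2 / (t * (1 - t))))
        ((50 * ((11 : ℝ) / 10) ^ (t * (2 - t))) ^ (2 / (1 - t))))
    (hN₀1 : (N₀ : ℝ) ≥ 4752 * (M : ℝ) ^ 4)
    (hN₀2 : (N₀ : ℝ) ≥ 2 * r / (q * ((264 * (M : ℝ) ^ 2) ^ ((1 : ℝ) / t) - 2)))
    (hN₀3 : (N₀ : ℝ) ≥ (10 * q * (2 * q) ^ t * (M : ℝ)) ^ ((1 : ℝ) / (1 - t)))
    (hN₀4 : (N₀ : ℝ) ≥ (2 : ℝ) ^ ((1 : ℝ) / (1 - t - δ * t)) * (q + r) / q)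
    (hN₀5 : (N₀ : ℝ) ≥
      q⁻¹ * (q * (1 - t - δ * t) / (q + r) ^ (t + δ * t)) ^ ((1 : ℝ) / (1 - t - δ * t)))
    (hN₀6 : (N₀ : ℝ) ≥ 1 / (1 - (2 : ℝ) ^ (-(1 / (2 * t - 1)))))
    (hN₀7 : (N₀ : ℝ) ≥
      q⁻¹ * (2 * q * (1 - t - δ * t)) ^ (2 / (1 - δ)) *
        (2 / (q * (2 * t - 1))) ^ ((1 + δ) / (1 - δ)) * (M : ℝ) ^ ((2 - δ) / (1 - δ)))
    (hN₀8 : (N₀ : ℝ) ≥ q⁻¹ * (2 / (q * (2 * t - 1))) ^ ((1 : ℝ) / (2 * t - 1))) :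
    ∀ n₀ : ℕ, N₀ ≤ n₀ →
      ∃ (c : ℝ × ℝ) (pos : {n : ℕ // n₀ ≤ n} → ℝ × ℝ),
        PerfectlyPacked
          (fun n : {n : ℕ // n₀ ≤ n} => square (pos n) ((q * ((n : ℕ) : ℝ) + r) ^ (-t)))
          (square c
            (Real.sqrt (∑' n : {n : ℕ // n₀ ≤ n}, (q * ((n : ℕ) : ℝ) + r) ^ (-(2 * t))))) := by
  intro n₀ hn
  have hq : 0 < q := hr.trans_lt hqr
  have hn₀ : 0 < n₀ := hN₀.trans_le hn
  have hnR : (N₀ : ℝ) ≤ n₀ := by exact_mod_cast hn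
  have hρ : 0 ≤ r / q := by positivity
  have hN : (N₀ : ℝ) ≤ n₀ + r / q := by linarith
  have hM1 : (1 : ℝ) ≤ M := by exact_mod_cast hM
  have hp : 0 < 2 * t - 1 := by linarith
  have hκ : 1 - t - δ * t = (1 - t) ^ 2 := by rw [hδ]; ring
  have hL : LargeEnough t (n₀ + r / q) := by
    rw [hκ] at hMbig hN₀4 hN₀7
    obtain ⟨hM4, hM50⟩ := max_le_iff.1 hMbig
    have h50 := fifty_rpow_le ht₁ ht₂ hM50
    refine largeEnough_of_le ht₁ ht₂ h50 (inv_sq_rpow_le ht₁ ht₂ h50 hM4) (hN₀1.le.trans hN)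
      ?_ fun hκt => ?_
    · refine le_trans ?_ (hN₀4.le.trans hN)
      rw [mul_div_assoc]
      refine le_mul_of_one_le_right (by positivity) ?_
      rw [le_div_iff₀ hq]; linarith
    · refine (rpow_bound_simplify ht₁ ht₂ hq (by positivity) hκt hM1).trans ?_
      rw [show 1 - δ = t by rw [hδ]; ring, show 1 + δ = 2 - t by rw [hδ]; ring,
        show 2 - δ = 1 + t by rw [hδ]; ring] at hN₀7
      gcongr
      exact hN₀7.le.trans hN
  obtain ⟨pos, hsub, hdisj⟩ := exists_disjoint_packing ht₁ ht₂ hρ hn₀ hL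
  have hσ : 0 < q ^ (-t) := by positivity
  have hside : ∀ n : ℕ, (q * (n : ℝ) + r) ^ (-t) = q ^ (-t) * side (r / q) t n := fun n => by
    rw [side, ← Real.mul_rpow hq.le (by positivity)]
    congr 1; field_simp
  have hsq : ∀ n : ℕ, (q * (n : ℝ) + r) ^ (-(2 * t)) = (q ^ (-t) * side (r / q) t n) ^ 2 :=
    fun n => by
      rw [← hside, ← Real.rpow_natCast, ← Real.rpow_mul (by positivity)]
      congr 1; push_cast; ring
  have hsum : HasSum (fun n : {n : ℕ // n₀ ≤ n} => (q ^ (-t) * side (r / q) t n) ^ 2)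
      ((q ^ (-t)) ^ 2 * tailArea (r / q) t n₀) := by
    simp only [mul_pow]
    refine HasSum.mul_left _ ?_
    let e : ℕ ≃ {n : ℕ // n₀ ≤ n} :=
      ⟨fun i => ⟨n₀ + i, by omega⟩, fun n => n - n₀, fun i => by simp, fun n => by
        ext; simp [n.2]⟩
    rw [← e.hasSum_iff]
    exact (summable_side_sq ht₁ hρ hn₀).hasSum
  have hbig : √(∑' n : {n : ℕ // n₀ ≤ n}, (q * ((n : ℕ) : ℝ) + r) ^ (-(2 * t))) =
      q ^ (-t) * √(tailArea (r / q) t n₀) := by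
    simp only [hsq]
    rw [hsum.tsum_eq, Real.sqrt_mul (by positivity), Real.sqrt_sq hσ.le]
  rw [hbig]
  simp only [hside]
  refine ⟨q ^ (-t) • (0, 0), fun n => q ^ (-t) • pos n, perfectlyPacked_of_boxes (by positivity)
    (fun n => mul_pos hσ (side_pos hρ (hn₀.trans_le n.2))) (fun n => ?_) (fun i j hij => ?_) ?_⟩
  · have h := preimage_mono (f := fun z : ℝ × ℝ => (q ^ (-t))⁻¹ • z) (hsub n n.2)
    rwa [← Box.toSet_smul hσ, ← Box.toSet_smul hσ] at h
  · have h := (hdisj i j i.2 j.2 (fun h => hij (Subtype.ext h))).preimage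
      (fun z : ℝ × ℝ => (q ^ (-t))⁻¹ • z)
    rwa [← Box.toSet_smul hσ, ← Box.toSet_smul hσ] at h
  · have : 0 ≤ tailArea (r / q) t n₀ := tsum_nonneg fun i => sq_nonneg _
    rwa [mul_pow, Real.sq_sqrt this]
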